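/- arXiv:math/9504209 — 2 statements merged into one kernel-verified Lean document; each statement's English description precedes it below -/
import Mathlib

section
/- Let A, B ∈ SL(2,ℂ) generate a discrete nonelementary subgroup, and suppose A is parabolic. Then for every C ∈ SL(2,ℂ), max{‖C·A·C⁻¹‖², ‖C·B·C⁻¹‖²} ≥ 5/2. (Equivalently, every point x of hyperbolic 3-space is moved hyperbolic distance at least arccosh(5/4) = 0.6931… by A or by B.) -/
open Matrix Real

noncomputable section

abbrev SL2C := Matrix.SpecialLinearGroup (Fin 2) ℂ

/-- The Frobenius (Hilbert–Schmidt) norm of a 2×2 complex matrix. -/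
def fnorm (A : Matrix (Fin 2) (Fin 2) ℂ) : ℝ :=
  @norm _ Matrix.frobeniusSeminormedAddCommGroup.toNorm A

instance : TopologicalSpace SL2C :=
  TopologicalSpace.induced (fun g => (g : Matrix (Fin 2) (Fin 2) ℂ)) inferInstance

/-- A subgroup of `SL(2,ℂ)` is discrete if it is a discrete subspace of `SL(2,ℂ)`. -/
def IsDiscreteSubgroup (Γ : Subgroup SL2C) : Prop := DiscreteTopology Γ

/-- `A` is elliptic of order `n`: `A^n = ±1` but `A^k ≠ ±1` for `1 ≤ k < n`. -/
def IsEllipticOfOrder (A : SL2C) (n : ℕ) : Prop :=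
  (A ^ n = 1 ∨ A ^ n = -1) ∧ ∀ k : ℕ, 1 ≤ k → k < n → A ^ k ≠ 1 ∧ A ^ k ≠ -1

/-- `A` is parabolic: `A ≠ ±1` and `tr A = ±2`. -/
def IsParabolic (A : SL2C) : Prop :=
  A ≠ 1 ∧ A ≠ -1 ∧ (Matrix.trace (A : Matrix (Fin 2) (Fin 2) ℂ) = 2 ∨
    Matrix.trace (A : Matrix (Fin 2) (Fin 2) ℂ) = -2)

/-- `S` and `T` have a common eigenvector in `ℂ²`. -/
def HasCommonEigenvector (S T : SL2C) : Prop :=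
  ∃ v : Fin 2 → ℂ, v ≠ 0 ∧ (∃ a : ℂ, (S : Matrix (Fin 2) (Fin 2) ℂ).mulVec v = a • v) ∧
    (∃ b : ℂ, (T : Matrix (Fin 2) (Fin 2) ℂ).mulVec v = b • v)

/-- A subgroup of `SL(2,ℂ)` is nonelementary if it contains two elements `S`, `T`
with `S^k ≠ ±1 ≠ T^k` for all `k ≥ 1` having no common eigenvector in `ℂ²`. -/
def IsNonelementary (Γ : Subgroup SL2C) : Prop :=
  ∃ S ∈ Γ, ∃ T ∈ Γ, (∀ k : ℕ, 1 ≤ k → S ^ k ≠ 1 ∧ S ^ k ≠ -1) ∧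
    (∀ k : ℕ, 1 ≤ k → T ^ k ≠ 1 ∧ T ^ k ≠ -1) ∧ ¬ HasCommonEigenvector S T

/-- The trace parameter `β(A) = tr²(A) - 4`. -/
def βp (A : SL2C) : ℂ := (Matrix.trace (A : Matrix (Fin 2) (Fin 2) ℂ)) ^ 2 - 4

/-- The commutator parameter `γ(A,B) = tr [A,B] - 2`. -/
def γp (A B : SL2C) : ℂ :=
  Matrix.trace ((A * B * A⁻¹ * B⁻¹ : SL2C) : Matrix (Fin 2) (Fin 2) ℂ) - 2

/-- `PSL(2,ℂ)`, the quotient of `SL(2,ℂ)` by its center `{1, -1}`. -/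
abbrev PSL2C := SL2C ⧸ Subgroup.center SL2C

/-- The image in `PSL(2,ℂ)` of a subgroup of `SL(2,ℂ)`. -/
def pslImage (Γ : Subgroup SL2C) : Subgroup PSL2C :=
  Γ.map (QuotientGroup.mk' (Subgroup.center SL2C))

open Classical in
/-- `t5`: the unique real `t > 1` with
`t (t - cos²(π/5)) + (t-1) √((t+1)(t+1-2 cos²(π/5))) = 1/2`. -/
def t5 : ℝ :=
  if h : ∃ t : ℝ, 1 < t ∧
      t * (t - Real.cos (π / 5) ^ 2) +
        (t - 1) * Real.sqrt ((t + 1) * (t + 1 - 2 * Real.cos (π / 5) ^ 2)) = 1 / 2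
  then h.choose else 0

/-- The value `t n = cosh (c n)` where `c n` is the sharp displacement bound for
discrete nonelementary groups with an elliptic generator of order `n ≥ 3`. -/
def tOf : ℕ → ℝ
  | 3 => (2 * Real.sqrt (8 + 2 * Real.sqrt 5) - (1 + Real.sqrt 5)) / (6 - Real.sqrt 5)
  | 4 => (Real.sqrt (6 + 2 * Real.sqrt 3) - Real.sqrt 3) / (3 - Real.sqrt 3)
  | 5 => t5
  | 6 => 17 / 16
  | n => (5 - 2 * Real.sin (π / n) ^ 2) / (4 + 2 * Real.sin (π / n) ^ 2)

/-- Entries of `Y P Y⁻¹` for `P` upper triangular with equal diagonal entries. -/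
lemma conj_entries (P Y : SL2C) (e w : ℂ) (h00 : P 0 0 = e) (h01 : P 0 1 = w) (h10 : P 1 0 = 0)
    (h11 : P 1 1 = e) :
    (Y * P * Y⁻¹) 0 0 = e - w * Y 0 0 * Y 1 0 ∧ (Y * P * Y⁻¹) 0 1 = w * Y 0 0 ^ 2 ∧
    (Y * P * Y⁻¹) 1 0 = - w * Y 1 0 ^ 2 ∧ (Y * P * Y⁻¹) 1 1 = e + w * Y 0 0 * Y 1 0 := by
  have hdet : Y 0 0 * Y 1 1 - Y 0 1 * Y 1 0 = 1 := by
    have := Y.det_coe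
    rwa [Matrix.det_fin_two] at this
  simp only [Matrix.SpecialLinearGroup.coe_mul, Matrix.SpecialLinearGroup.coe_inv,
    Matrix.adjugate_fin_two, Matrix.mul_apply, Fin.sum_univ_two, h00, h01, h10, h11,
    Matrix.of_apply, Matrix.cons_val', Matrix.cons_val_zero, Matrix.cons_val_one,
    Matrix.cons_val_fin_one]
  refine ⟨?_, ?_, ?_, ?_⟩
  · linear_combination e * hdet
  · ring
  · ring
  · linear_combination e * hdet

/-- The Shimizu sequence. -/
def shim (A B : SL2C) : ℕ → SL2C
  | 0 => B
  | n + 1 => shim A B n * A * (shim A B n)⁻¹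

lemma shim_mem (A B : SL2C) (n : ℕ) : shim A B n ∈ Subgroup.closure {A, B} := by
  induction n with
  | zero => exact Subgroup.subset_closure (by simp [shim])
  | succ n ih =>
    exact Subgroup.mul_mem _ (Subgroup.mul_mem _ ih (Subgroup.subset_closure (by simp)))
      (Subgroup.inv_mem _ ih)

lemma shim_conj (A B D : SL2C) (n : ℕ) :
    D * shim A B n * D⁻¹ = shim (D * A * D⁻¹) (D * B * D⁻¹) n := by
  induction n with
  | zero => rfl
  | succ n ih => simp only [shim, ← ih]; group

open Filter Topology in
lemma shim_tendsto (P Q : SL2C) (e w : ℂ) (he : ‖e‖ = 1) (h00 : P 0 0 = e) (h01 : P 0 1 = w)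
    (h10 : P 1 0 = 0) (h11 : P 1 1 = e) (hr : ‖w * Q 1 0‖ < 1) (i j : Fin 2) :
    Tendsto (fun n => shim P Q n i j) atTop (𝓝 (P i j)) := by
  set r := ‖w * Q 1 0‖ with hrdef
  have hr0 : 0 ≤ r := norm_nonneg _
  have step := fun n => conj_entries P (shim P Q n) e w h00 h01 h10 h11
  have hc : ∀ n, ‖w * shim P Q n 1 0‖ ≤ r ^ (n + 1) := by
    intro n
    induction n with
    | zero => simp [shim, hrdef]
    | succ n ih =>
      have : w * shim P Q (n + 1) 1 0 = - ((w * shim P Q n 1 0) * (w * shim P Q n 1 0)) := by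
        rw [shim, (step n).2.2.1]; ring
      rw [this, norm_neg, norm_mul]
      have h1 : ‖w * shim P Q n 1 0‖ ≤ r := ih.trans (by
        rw [pow_succ]; exact mul_le_of_le_one_left hr0 (pow_le_one₀ hr0 hr.le))
      calc _ ≤ r ^ (n + 1) * r := mul_le_mul ih h1 (norm_nonneg _) (by positivity)
        _ = _ := by ring
  have hc0 : Tendsto (fun n => w * shim P Q n 1 0) atTop (𝓝 0) := by
    apply squeeze_zero_norm hc
    exact (tendsto_pow_atTop_nhds_zero_of_lt_one hr0 hr).comp (tendsto_add_atTop_nat 1)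
  obtain ⟨M, hM0, hM⟩ : ∃ M : ℝ, 0 ≤ M ∧ ∀ n, ‖shim P Q n 0 0‖ ≤ M := by
    refine ⟨max ‖Q 0 0‖ (1 / (1 - r)), le_max_of_le_left (norm_nonneg _), fun n => ?_⟩
    induction n with
    | zero => simp [shim]
    | succ n ih =>
      set M := max ‖Q 0 0‖ (1 / (1 - r))
      have hM1 : 1 ≤ M * (1 - r) := by
        have : 1 / (1 - r) ≤ M := le_max_right _ _
        rwa [div_le_iff₀ (by linarith)] at this
      have h1 : ‖w * shim P Q n 1 0‖ ≤ r := (hc n).trans (by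
        rw [pow_succ]; exact mul_le_of_le_one_left hr0 (pow_le_one₀ hr0 hr.le))
      rw [shim, (step n).1]
      have h2 : e - w * shim P Q n 0 0 * shim P Q n 1 0
        = e - (w * shim P Q n 1 0) * shim P Q n 0 0 := by ring
      rw [h2]
      refine (norm_sub_le _ _).trans ?_
      rw [he, norm_mul]
      have := mul_le_mul h1 ih (norm_nonneg _) hr0
      linarith
  have hac : Tendsto (fun n => w * shim P Q n 0 0 * shim P Q n 1 0) atTop (𝓝 0) := by
    have : Tendsto (fun n => ‖w * shim P Q n 1 0‖ * M) atTop (𝓝 0) := by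
      simpa using hc0.norm.mul_const M
    apply squeeze_zero_norm _ this
    intro n
    have h2 : w * shim P Q n 0 0 * shim P Q n 1 0
        = (w * shim P Q n 1 0) * shim P Q n 0 0 := by ring
    rw [h2, norm_mul]
    exact mul_le_mul_of_nonneg_left (hM n) (norm_nonneg _)
  have ha : Tendsto (fun n => shim P Q n 0 0) atTop (𝓝 e) := by
    rw [← tendsto_add_atTop_iff_nat 1]
    simp only [shim, fun n => (step n).1]
    simpa using hac.const_sub e
  have e2 : e ^ 2 = 1 := by
    have := P.det_coe
    rw [Matrix.det_fin_two] at this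
    simp only [h00, h01, h10, h11] at this
    linear_combination this
  rw [← tendsto_add_atTop_iff_nat 1]
  fin_cases i <;> fin_cases j
  · simpa [h00] using (tendsto_add_atTop_iff_nat 1).2 ha
  · simp only [shim, Fin.mk_one, Fin.zero_eta, fun n => (step n).2.1, h01]
    simpa [e2] using (ha.pow 2).const_mul w
  · simp only [Fin.mk_one, Fin.zero_eta, h10]
    rw [tendsto_add_atTop_iff_nat (f := fun n => shim P Q n 1 0) 1]
    by_cases hw : w = 0
    · rw [← tendsto_add_atTop_iff_nat 1]
      simp only [shim, fun n => (step n).2.2.1, hw]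
      simp
    · have := hc0.const_mul w⁻¹
      simpa [hw] using this
  · simp only [shim, Fin.mk_one, fun n => (step n).2.2.2, h11]
    simpa using hac.const_add e

open Filter Topology in
/-- Shimizu's lemma. -/
lemma shimizu (A B D : SL2C) (hd : IsDiscreteSubgroup (Subgroup.closure {A, B})) (e w : ℂ)
    (he : ‖e‖ = 1) (hw : w ≠ 0)
    (h00 : (D * A * D⁻¹) 0 0 = e) (h01 : (D * A * D⁻¹) 0 1 = w)
    (h10 : (D * A * D⁻¹) 1 0 = 0) (h11 : (D * A * D⁻¹) 1 1 = e)
    (hc : (D * B * D⁻¹) 1 0 ≠ 0) : 1 ≤ ‖w * (D * B * D⁻¹) 1 0‖ := by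
  by_contra! hr
  set P := D * A * D⁻¹ with hP
  set Q := D * B * D⁻¹ with hQ
  have hne : ∀ n, shim P Q n 1 0 ≠ 0 := by
    intro n
    induction n with
    | zero => exact hc
    | succ n ih =>
      rw [shim, (conj_entries P (shim P Q n) e w h00 h01 h10 h11).2.2.1]
      exact mul_ne_zero (neg_ne_zero.2 hw) (pow_ne_zero _ ih)
  have ht : Tendsto (fun n => (shim P Q n : Matrix (Fin 2) (Fin 2) ℂ)) atTop
      (𝓝 (P : Matrix (Fin 2) (Fin 2) ℂ)) := by
    refine tendsto_pi_nhds.2 fun i => tendsto_pi_nhds.2 fun j => ?_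
    exact shim_tendsto P Q e w he h00 h01 h10 h11 hr i j
  have ht2 : Tendsto (fun n => (shim A B n : Matrix (Fin 2) (Fin 2) ℂ)) atTop
      (𝓝 (A : Matrix (Fin 2) (Fin 2) ℂ)) := by
    have h1 := (ht.const_mul ((D⁻¹ : SL2C) : Matrix (Fin 2) (Fin 2) ℂ)).mul_const
      (D : Matrix (Fin 2) (Fin 2) ℂ)
    have h2 : ∀ n, ((D⁻¹ : SL2C) : Matrix (Fin 2) (Fin 2) ℂ) *
        (shim P Q n : Matrix (Fin 2) (Fin 2) ℂ) * (D : Matrix (Fin 2) (Fin 2) ℂ)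
        = (shim A B n : Matrix (Fin 2) (Fin 2) ℂ) := by
      intro n
      rw [hP, hQ, ← shim_conj, ← Matrix.SpecialLinearGroup.coe_mul,
        ← Matrix.SpecialLinearGroup.coe_mul]
      congr 1
      group
      rfl
    have h3 : ((D⁻¹ : SL2C) : Matrix (Fin 2) (Fin 2) ℂ) *
        (P : Matrix (Fin 2) (Fin 2) ℂ) * (D : Matrix (Fin 2) (Fin 2) ℂ)
        = (A : Matrix (Fin 2) (Fin 2) ℂ) := by
      rw [hP, ← Matrix.SpecialLinearGroup.coe_mul, ← Matrix.SpecialLinearGroup.coe_mul]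
      congr 1
      group
      rfl
    simpa only [h2, h3] using h1
  have hAm : A ∈ Subgroup.closure {A, B} := Subgroup.subset_closure (by simp)
  have ht3 : Tendsto (fun n => (⟨shim A B n, shim_mem A B n⟩ : Subgroup.closure {A, B})) atTop
      (𝓝 ⟨A, hAm⟩) := by
    rw [tendsto_subtype_rng]
    have hi : Topology.IsInducing (fun g : SL2C => (g : Matrix (Fin 2) (Fin 2) ℂ)) := ⟨rfl⟩
    rw [hi.tendsto_nhds_iff]
    exact ht2
  have : DiscreteTopology (Subgroup.closure {A, B}) := hd
  rw [nhds_discrete, tendsto_pure] at ht3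
  obtain ⟨n, hn⟩ := ht3.exists
  have hn2 : shim A B n = A := congrArg Subtype.val hn
  have := hne n
  rw [hP, hQ, ← shim_conj, hn2] at this
  exact this h10

lemma fnorm_sq (M : Matrix (Fin 2) (Fin 2) ℂ) :
    fnorm M ^ 2 = ‖M 0 0‖ ^ 2 + ‖M 0 1‖ ^ 2 + ‖M 1 0‖ ^ 2 + ‖M 1 1‖ ^ 2 := by
  unfold fnorm
  have := Matrix.frobenius_norm_def M
  rw [this, ← Real.sqrt_eq_rpow, Real.sq_sqrt (by positivity)]
  simp only [Fin.sum_univ_two]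
  norm_cast
  ring

lemma fnorm_sq_trace (M : Matrix (Fin 2) (Fin 2) ℂ) :
    ((fnorm M ^ 2 : ℝ) : ℂ) = Matrix.trace (M * Mᴴ) := by
  rw [fnorm_sq]
  simp only [Matrix.trace_fin_two, Matrix.mul_apply, Fin.sum_univ_two, Matrix.conjTranspose_apply]
  push_cast
  simp only [← Complex.mul_conj', RCLike.star_def]
  ring

lemma fnorm_conj (U X : SL2C)
    (hU : ((U⁻¹ : SL2C) : Matrix (Fin 2) (Fin 2) ℂ) = (U : Matrix (Fin 2) (Fin 2) ℂ)ᴴ) :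
    fnorm ((U * X * U⁻¹ : SL2C) : Matrix (Fin 2) (Fin 2) ℂ) ^ 2
      = fnorm (X : Matrix (Fin 2) (Fin 2) ℂ) ^ 2 := by
  have h1 : (U : Matrix (Fin 2) (Fin 2) ℂ)ᴴ * (U : Matrix (Fin 2) (Fin 2) ℂ) = 1 := by
    rw [← hU, ← Matrix.SpecialLinearGroup.coe_mul]; simp
  have : ((fnorm ((U * X * U⁻¹ : SL2C) : Matrix (Fin 2) (Fin 2) ℂ) ^ 2 : ℝ) : ℂ)
      = ((fnorm (X : Matrix (Fin 2) (Fin 2) ℂ) ^ 2 : ℝ) : ℂ) := by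
    rw [fnorm_sq_trace, fnorm_sq_trace]
    simp only [Matrix.SpecialLinearGroup.coe_mul, hU, Matrix.conjTranspose_mul,
      Matrix.conjTranspose_conjTranspose]
    generalize (U : Matrix (Fin 2) (Fin 2) ℂ) = V at *
    generalize (X : Matrix (Fin 2) (Fin 2) ℂ) = Y at *
    calc (V * Y * Vᴴ * (V * (Yᴴ * Vᴴ))).trace
        = (V * (Y * (Vᴴ * V) * Yᴴ * Vᴴ)).trace := by simp only [Matrix.mul_assoc]
      _ = _ := by
        rw [h1, Matrix.trace_mul_comm, Matrix.mul_assoc, h1]; simp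
  exact_mod_cast this

/-- Unitary triangularization. -/
lemma exists_unitary (A : SL2C) (e : ℂ) (he : e ^ 2 = 1)
    (htr : Matrix.trace (A : Matrix (Fin 2) (Fin 2) ℂ) = 2 * e) :
    ∃ U : SL2C, ((U⁻¹ : SL2C) : Matrix (Fin 2) (Fin 2) ℂ) = (U : Matrix (Fin 2) (Fin 2) ℂ)ᴴ ∧
      (U * A * U⁻¹) 0 0 = e ∧ (U * A * U⁻¹) 1 0 = 0 ∧ (U * A * U⁻¹) 1 1 = e := by
  have hdet := A.det_coe
  rw [Matrix.det_fin_two] at hdet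
  rw [Matrix.trace_fin_two] at htr
  obtain ⟨v, hv0, hv⟩ : ∃ v : Fin 2 → ℂ, v ≠ 0 ∧
      (!![A 0 0 - e, A 0 1; A 1 0, A 1 1 - e] : Matrix (Fin 2) (Fin 2) ℂ) *ᵥ v = 0 := by
    rw [Matrix.exists_mulVec_eq_zero_iff, Matrix.det_fin_two_of]
    linear_combination hdet - e * htr - he
  have hv1 : (A 0 0 - e) * v 0 + A 0 1 * v 1 = 0 := by
    simpa [Matrix.mulVec, dotProduct, Fin.sum_univ_two] using congrFun hv 0
  have hv2 : A 1 0 * v 0 + (A 1 1 - e) * v 1 = 0 := by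
    simpa [Matrix.mulVec, dotProduct, Fin.sum_univ_two] using congrFun hv 1
  set s : ℝ := Real.sqrt (‖v 0‖ ^ 2 + ‖v 1‖ ^ 2) with hs
  have hpos : 0 < ‖v 0‖ ^ 2 + ‖v 1‖ ^ 2 := by
    by_contra! h
    apply hv0
    have h0 : ‖v 0‖ = 0 := by nlinarith [sq_nonneg ‖v 0‖, sq_nonneg ‖v 1‖]
    have h1 : ‖v 1‖ = 0 := by nlinarith [sq_nonneg ‖v 0‖, sq_nonneg ‖v 1‖]
    ext i
    fin_cases i
    · simpa using h0
    · simpa using h1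
  have hs0 : (s : ℂ) ≠ 0 := by
    exact_mod_cast (Real.sqrt_pos.2 hpos).ne'
  have hs2 : (s : ℂ) ^ 2 = v 0 * star (v 0) + v 1 * star (v 1) := by
    simp only [RCLike.star_def, Complex.mul_conj']
    exact_mod_cast Real.sq_sqrt hpos.le
  obtain ⟨p, hp⟩ : ∃ p, p = v 0 / s := ⟨_, rfl⟩
  obtain ⟨q, hq⟩ : ∃ q, q = v 1 / s := ⟨_, rfl⟩
  have hpq : p * star p + q * star q = 1 := by
    rw [hp, hq]
    simp only [RCLike.star_def, map_div₀, Complex.conj_ofReal] at hs2 ⊢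
    field_simp
    linear_combination -hs2
  have hp1 : (A 0 0 - e) * p + A 0 1 * q = 0 := by
    rw [hp, hq]; field_simp; linear_combination hv1
  have hp2 : A 1 0 * p + (A 1 1 - e) * q = 0 := by
    rw [hp, hq]; field_simp; linear_combination hv2
  obtain ⟨U, hU⟩ : ∃ U : SL2C, (U : Matrix (Fin 2) (Fin 2) ℂ) = !![star p, star q; -q, p] :=
    ⟨⟨!![star p, star q; -q, p], by rw [Matrix.det_fin_two_of]; linear_combination hpq⟩, rfl⟩
  refine ⟨U, ?_, ?_⟩
  · rw [Matrix.SpecialLinearGroup.coe_inv, Matrix.adjugate_fin_two, hU]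
    ext i j
    fin_cases i <;> fin_cases j <;> simp
  · generalize star p = p' at *
    generalize star q = q' at *
    simp only [Matrix.SpecialLinearGroup.coe_mul, Matrix.SpecialLinearGroup.coe_inv,
      Matrix.adjugate_fin_two, Matrix.mul_apply, Fin.sum_univ_two, hU,
      Matrix.of_apply, Matrix.cons_val', Matrix.cons_val_zero, Matrix.cons_val_one,
      Matrix.cons_val_fin_one]
    refine ⟨?_, ?_, ?_⟩
    · linear_combination p' * hp1 + q' * hp2 + e * hpq
    · linear_combination -q * hp1 + p * hp2
    · linear_combination (A 0 0 + A 1 1 - e) * hpq - p' * hp1 - q' * hp2 + htr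

/-- The elementary norm estimate. -/
lemma norm_bound (a b c d : ℂ) (hdet : a * d - b * c = 1) (hc : 2 ≤ ‖c‖ ^ 2) :
    5 / 2 ≤ ‖a‖ ^ 2 + ‖b‖ ^ 2 + ‖c‖ ^ 2 + ‖d‖ ^ 2 := by
  have h1 : 1 ≤ ‖a‖ * ‖d‖ + ‖b‖ * ‖c‖ := by
    have := norm_sub_le (a * d) (b * c)
    rwa [hdet, norm_one, norm_mul, norm_mul] at this
  have ha := norm_nonneg a
  have hd := norm_nonneg d
  have hb := norm_nonneg b
  have hc0 := norm_nonneg c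
  generalize ‖a‖ = x at *
  generalize ‖b‖ = y at *
  generalize ‖c‖ = z at *
  generalize ‖d‖ = t at *
  by_contra! h
  by_cases hyz : 1 ≤ y * z
  · have h2 : 1 ≤ y ^ 2 * z ^ 2 := by nlinarith
    have h3 : z ^ 2 + y ^ 2 < 5 / 2 := by nlinarith [sq_nonneg x, sq_nonneg t]
    nlinarith
  · push Not at hyz
    have h2 : (z - y) ^ 2 < 1 / 2 := by nlinarith [sq_nonneg (x - t)]
    have h3 : z * (z - y) ≥ 1 := by nlinarith
    have h4 : 1 ≤ z ^ 2 * (z - y) ^ 2 := by nlinarith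
    have h5 : z ^ 2 < 5 / 2 := by nlinarith [sq_nonneg x, sq_nonneg y, sq_nonneg t]
    nlinarith [sq_nonneg x, sq_nonneg y, sq_nonneg t, sq_nonneg (x - t)]

lemma no_common (A B D : SL2C) (hne : IsNonelementary (Subgroup.closure {A, B}))
    (hA : (D * A * D⁻¹) 1 0 = 0) : (D * B * D⁻¹) 1 0 ≠ 0 := by
  intro hB
  obtain ⟨S, hS, T, hT, -, -, hST⟩ := hne
  let K : Subgroup SL2C :=
    { carrier := {g | (D * g * D⁻¹) 1 0 = 0}
      one_mem' := by
        have : D * 1 * D⁻¹ = 1 := by group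
        simp only [Set.mem_ofPred_eq]
        rw [this, Matrix.SpecialLinearGroup.coe_one]
        simp
      mul_mem' := by
        intro g h hg hh
        have : D * (g * h) * D⁻¹ = (D * g * D⁻¹) * (D * h * D⁻¹) := by group
        simp only [Set.mem_ofPred_eq] at *
        rw [this, Matrix.SpecialLinearGroup.coe_mul, Matrix.mul_apply, Fin.sum_univ_two, hg, hh]
        simp
      inv_mem' := by
        intro g hg
        have : D * g⁻¹ * D⁻¹ = (D * g * D⁻¹)⁻¹ := by group
        simp only [Set.mem_ofPred_eq] at *
        rw [this, Matrix.SpecialLinearGroup.coe_inv, Matrix.adjugate_fin_two]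
        simp only [Matrix.of_apply, Matrix.cons_val', Matrix.cons_val_zero, Matrix.cons_val_one,
          Matrix.cons_val_fin_one, hg, neg_zero] }
  have hle : Subgroup.closure {A, B} ≤ K := by
    rw [Subgroup.closure_le]
    rintro g (rfl | rfl)
    · exact hA
    · exact hB
  have key : ∀ g ∈ K, ∃ a : ℂ, (g : Matrix (Fin 2) (Fin 2) ℂ) *ᵥ
      (((D⁻¹ : SL2C) : Matrix (Fin 2) (Fin 2) ℂ) *ᵥ ![1, 0])
      = a • (((D⁻¹ : SL2C) : Matrix (Fin 2) (Fin 2) ℂ) *ᵥ ![1, 0]) := by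
    intro g hg
    have hg' : (D * g * D⁻¹) 1 0 = 0 := hg
    refine ⟨(D * g * D⁻¹) 0 0, ?_⟩
    have h1 : g * D⁻¹ = D⁻¹ * (D * g * D⁻¹) := by group
    rw [Matrix.mulVec_mulVec, ← Matrix.SpecialLinearGroup.coe_mul, h1,
      Matrix.SpecialLinearGroup.coe_mul, ← Matrix.mulVec_mulVec, ← Matrix.mulVec_smul]
    congr 1
    ext i
    fin_cases i
    · simp [Matrix.mulVec, dotProduct, Fin.sum_univ_two]
    · simpa [Matrix.mulVec, dotProduct, Fin.sum_univ_two] using hg'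
  apply hST
  refine ⟨((D⁻¹ : SL2C) : Matrix (Fin 2) (Fin 2) ℂ) *ᵥ ![1, 0], ?_, key S (hle hS), key T (hle hT)⟩
  intro h0
  have h1 : (D : Matrix (Fin 2) (Fin 2) ℂ) *ᵥ
      (((D⁻¹ : SL2C) : Matrix (Fin 2) (Fin 2) ℂ) *ᵥ ![1, 0]) = 0 := by rw [h0, Matrix.mulVec_zero]
  rw [Matrix.mulVec_mulVec, ← Matrix.SpecialLinearGroup.coe_mul, mul_inv_cancel,
    Matrix.SpecialLinearGroup.coe_one, Matrix.one_mulVec] at h1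
  simpa using congrFun h1 0

/-- Theorem 1.18: the sharp displacement bound `arccosh (5/4)` for discrete
nonelementary two-generator groups with a parabolic generator. -/
theorem margulis_parabolic (A B : SL2C)
    (hd : IsDiscreteSubgroup (Subgroup.closure {A, B}))
    (hne : IsNonelementary (Subgroup.closure {A, B}))
    (hA : IsParabolic A) :
    ∀ C : SL2C,
      max (fnorm ((C * A * C⁻¹ : SL2C) : Matrix (Fin 2) (Fin 2) ℂ) ^ 2)
      (fnorm ((C * B * C⁻¹ : SL2C) : Matrix (Fin 2) (Fin 2) ℂ) ^ 2) ≥ 5 / 2 := by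
  intro C
  obtain ⟨hA1, hA2, htr⟩ := hA
  obtain ⟨e, he, htr⟩ : ∃ e : ℂ, (e = 1 ∨ e = -1) ∧
      Matrix.trace (A : Matrix (Fin 2) (Fin 2) ℂ) = 2 * e := by
    rcases htr with h | h
    · exact ⟨1, Or.inl rfl, by rw [h]; ring⟩
    · exact ⟨-1, Or.inr rfl, by rw [h]; ring⟩
  have he2 : e ^ 2 = 1 := by rcases he with rfl | rfl <;> norm_num
  have hen : ‖e‖ = 1 := by rcases he with rfl | rfl <;> simp
  have htr' : Matrix.trace ((C * A * C⁻¹ : SL2C) : Matrix (Fin 2) (Fin 2) ℂ) = 2 * e := by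
    rw [Matrix.SpecialLinearGroup.coe_mul, Matrix.trace_mul_comm,
      ← Matrix.SpecialLinearGroup.coe_mul, ← htr]
    congr 2
    group
    rfl
  obtain ⟨U, hU, h00, h10, h11⟩ := exists_unitary (C * A * C⁻¹) e he2 htr'
  have hAD : U * (C * A * C⁻¹) * U⁻¹ = (U * C) * A * (U * C)⁻¹ := by group
  have hBD : U * (C * B * C⁻¹) * U⁻¹ = (U * C) * B * (U * C)⁻¹ := by group
  rw [← fnorm_conj U _ hU, ← fnorm_conj U (C * B * C⁻¹) hU, hAD, hBD]
  rw [hAD] at h00 h10 h11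
  generalize U * C = D at *
  have hc := no_common A B D hne h10
  have hw : (D * A * D⁻¹) 0 1 ≠ 0 := by
    intro hw
    have hconj : ∀ Z : SL2C, D * A * D⁻¹ = Z → A = D⁻¹ * Z * D := by
      rintro Z rfl; group
    rcases he with rfl | rfl
    · apply hA1
      rw [hconj 1 ?_]
      · simp
      · ext i j
        fin_cases i <;> fin_cases j
        · simpa using h00
        · simpa using hw
        · simpa using h10
        · simpa using h11
    · apply hA2
      rw [hconj (-1) ?_]
      · simp
      · ext i j
        fin_cases i <;> fin_cases j
        · simpa using h00
        · simpa using hw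
        · simpa using h10
        · simpa using h11
  have hsh := shimizu A B D hd e _ hen hw h00 rfl h10 h11 hc
  rw [norm_mul] at hsh
  by_contra! hlt
  rw [max_lt_iff, fnorm_sq, fnorm_sq] at hlt
  obtain ⟨hlA, hlB⟩ := hlt
  rw [h00, h10, h11, hen, norm_zero] at hlA
  have hdet := (D * B * D⁻¹).det_coe
  rw [Matrix.det_fin_two] at hdet
  have hc2 : 2 ≤ ‖(D * B * D⁻¹) 1 0‖ ^ 2 := by
    have h1 : 1 ≤ ‖(D * A * D⁻¹) 0 1‖ ^ 2 * ‖(D * B * D⁻¹) 1 0‖ ^ 2 := by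
      rw [← mul_pow]; exact one_le_pow₀ hsh
    nlinarith [sq_nonneg ‖(D * B * D⁻¹) 1 0‖]
  have := norm_bound _ _ _ _ hdet hc2
  linarith

end
end

section
/- (Yamada's theorem; the Margulis constant for Fuchsian groups.) If A, B ∈ SL(2,ℝ) generate a discrete nonelementary subgroup of SL(2,ℝ), then for every z in the upper half plane ℍ, max{dist(A • z, z), dist(B • z, z)} ≥ 2·arsinh(√((2cos(2π/7) − 1)/(8cos(π/7) + 7))) = 0.2629… . -/
open Matrix Real

noncomputable section

abbrev SL2R := Matrix.SpecialLinearGroup (Fin 2) ℝ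

instance : TopologicalSpace SL2R :=
  TopologicalSpace.induced (fun g => (g : Matrix (Fin 2) (Fin 2) ℝ)) inferInstance

/-- A subgroup of `SL(2,ℝ)` is discrete if it is a discrete subspace of `SL(2,ℝ)`. -/
def IsDiscreteSubgroupR (Γ : Subgroup SL2R) : Prop := DiscreteTopology Γ

/-- `S` and `T`, viewed as complex matrices, have a common eigenvector in `ℂ²`. -/
def HasCommonEigenvectorR (S T : SL2R) : Prop :=
  ∃ v : Fin 2 → ℂ, v ≠ 0 ∧
    (∃ a : ℂ, ((S : Matrix (Fin 2) (Fin 2) ℝ).map (Complex.ofReal ·)).mulVec v = a • v) ∧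
    (∃ b : ℂ, ((T : Matrix (Fin 2) (Fin 2) ℝ).map (Complex.ofReal ·)).mulVec v = b • v)

/-- A subgroup of `SL(2,ℝ)` is nonelementary if it contains two elements `S`, `T`
with `S^k ≠ ±1 ≠ T^k` for all `k ≥ 1` having no common eigenvector in `ℂ²`. -/
def IsNonelementaryR (Γ : Subgroup SL2R) : Prop :=
  ∃ S ∈ Γ, ∃ T ∈ Γ, (∀ k : ℕ, 1 ≤ k → S ^ k ≠ 1 ∧ S ^ k ≠ -1) ∧
    (∀ k : ℕ, 1 ≤ k → T ^ k ≠ 1 ∧ T ^ k ≠ -1) ∧ ¬ HasCommonEigenvectorR S T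

def al (g : SL2R) : ℝ := (g 0 0 + g 1 1) / 2
def be (g : SL2R) : ℝ := (g 0 1 - g 1 0) / 2
def pp (g : SL2R) : ℝ := (g 0 0 - g 1 1) / 2
def rr (g : SL2R) : ℝ := (g 0 1 + g 1 0) / 2
def ip (g h : SL2R) : ℝ := pp g * pp h + rr g * rr h - be g * be h
def gam (g h : SL2R) : ℝ := 4 * (ip g h ^ 2 - ip g g * ip h h)
def nu (g : SL2R) : ℝ := be g ^ 2 + pp g ^ 2 + rr g ^ 2
def dd (g : SL2R) : ℝ := pp g ^ 2 + rr g ^ 2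

lemma al_mul (g h : SL2R) : al (g * h) = al g * al h - be g * be h + pp g * pp h + rr g * rr h := by
  simp only [al, be, pp, rr, Matrix.SpecialLinearGroup.coe_mul, Matrix.mul_apply, Fin.sum_univ_two]
  ring
lemma be_mul (g h : SL2R) : be (g * h) = al g * be h + be g * al h + pp g * rr h - rr g * pp h := by
  simp only [al, be, pp, rr, Matrix.SpecialLinearGroup.coe_mul, Matrix.mul_apply, Fin.sum_univ_two]
  ring
lemma pp_mul (g h : SL2R) : pp (g * h) = al g * pp h + pp g * al h + be g * rr h - rr g * be h := by
  simp only [al, be, pp, rr, Matrix.SpecialLinearGroup.coe_mul, Matrix.mul_apply, Fin.sum_univ_two]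
  ring
lemma rr_mul (g h : SL2R) : rr (g * h) = al g * rr h + rr g * al h - be g * pp h + pp g * be h := by
  simp only [al, be, pp, rr, Matrix.SpecialLinearGroup.coe_mul, Matrix.mul_apply, Fin.sum_univ_two]
  ring

lemma inv_entries (g : SL2R) : (g⁻¹ : SL2R) 0 0 = g 1 1 ∧ (g⁻¹ : SL2R) 0 1 = - g 0 1 ∧
    (g⁻¹ : SL2R) 1 0 = - g 1 0 ∧ (g⁻¹ : SL2R) 1 1 = g 0 0 := by
  rw [Matrix.SpecialLinearGroup.coe_inv, Matrix.adjugate_fin_two]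
  simp

lemma al_inv (g : SL2R) : al g⁻¹ = al g := by
  obtain ⟨h1, h2, h3, h4⟩ := inv_entries g
  simp only [al, h1, h4]; ring
lemma be_inv (g : SL2R) : be g⁻¹ = - be g := by
  obtain ⟨h1, h2, h3, h4⟩ := inv_entries g
  simp only [be, h2, h3]; ring
lemma pp_inv (g : SL2R) : pp g⁻¹ = - pp g := by
  obtain ⟨h1, h2, h3, h4⟩ := inv_entries g
  simp only [pp, h1, h4]; ring
lemma rr_inv (g : SL2R) : rr g⁻¹ = - rr g := by
  obtain ⟨h1, h2, h3, h4⟩ := inv_entries g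
  simp only [rr, h2, h3]; ring
lemma al_neg (g : SL2R) : al (-g) = - al g := by simp [al]; ring
lemma be_neg (g : SL2R) : be (-g) = - be g := by simp [be]; ring
lemma pp_neg (g : SL2R) : pp (-g) = - pp g := by simp [pp]; ring
lemma rr_neg (g : SL2R) : rr (-g) = - rr g := by simp [rr]; ring
lemma al_one : al 1 = 1 := by simp [al]
lemma be_one : be 1 = 0 := by simp [be]
lemma pp_one : pp 1 = 0 := by simp [pp]
lemma rr_one : rr 1 = 0 := by simp [rr]

lemma det_eq (g : SL2R) : al g ^ 2 + be g ^ 2 - pp g ^ 2 - rr g ^ 2 = 1 := by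
  have h := g.2
  rw [Matrix.det_fin_two] at h
  simp only [al, be, pp, rr]
  linear_combination h

lemma al_sq (g : SL2R) : al g ^ 2 = 1 + ip g g := by
  have := det_eq g
  simp only [ip]; linarith

lemma ext_coord {g h : SL2R} (h1 : al g = al h) (h2 : be g = be h) (h3 : pp g = pp h)
    (h4 : rr g = rr h) : g = h := by
  simp only [al, be, pp, rr] at *
  apply Subtype.ext
  ext i j
  fin_cases i <;> fin_cases j <;> simp <;> linarith



def Sc (la : ℝ) (y x : SL2R) : Prop := be y = la * be x ∧ pp y = la * pp x ∧ rr y = la * rr x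

lemma al_conj (h x : SL2R) : al (h * x * h⁻¹) = al x := by
  have := det_eq h
  simp only [al_mul, be_mul, pp_mul, rr_mul, al_inv, be_inv, pp_inv, rr_inv]
  linear_combination al x * this

lemma Sc_conj {la : ℝ} {y x : SL2R} (h : SL2R) (H : Sc la y x) :
    Sc la (h * y * h⁻¹) (h * x * h⁻¹) := by
  obtain ⟨h1, h2, h3⟩ := H
  refine ⟨?_, ?_, ?_⟩ <;>
  · simp only [al_mul, be_mul, pp_mul, rr_mul, al_inv, be_inv, pp_inv, rr_inv, h1, h2, h3]
    ring

lemma Sc_trans {la mu : ℝ} {x y z : SL2R} (H : Sc la z y) (K : Sc mu y x) : Sc (la * mu) z x := by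
  obtain ⟨h1, h2, h3⟩ := H
  obtain ⟨k1, k2, k3⟩ := K
  refine ⟨?_, ?_, ?_⟩ <;> simp only [h1, h2, h3, k1, k2, k3] <;> ring

lemma ip_conj (h x : SL2R) : ip (h * x * h⁻¹) (h * x * h⁻¹) = ip x x := by
  have h1 := al_sq (h * x * h⁻¹)
  have h2 := al_sq x
  rw [al_conj] at h1
  linarith

lemma ip_conj' (g h : SL2R) : ip g (h * g * h⁻¹) = ip g g - gam g h / 2 := by
  have := det_eq h
  simp only [gam, ip, al_mul, be_mul, pp_mul, rr_mul, al_inv, be_inv, pp_inv, rr_inv]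
  linear_combination (pp g ^ 2 + rr g ^ 2 - be g ^ 2) * this

lemma gam_conj (g h : SL2R) : gam g (h * g * h⁻¹) = gam g h * (gam g h - 4 * ip g g) := by
  rw [gam, ip_conj, ip_conj']; ring

lemma al_mul' (g h : SL2R) : al (g * h) = al g * al h + ip g h := by
  rw [al_mul, ip]; ring

lemma ip_mul_left (g h : SL2R) : ip g (g * h) = al h * ip g g + al g * ip g h := by
  simp only [ip, be_mul, pp_mul, rr_mul]; ring

lemma gam_mul (g h : SL2R) : gam g (g * h) = gam g h := by
  have h1 := al_sq (g * h)
  have h2 := al_sq g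
  have h3 := al_sq h
  rw [al_mul'] at h1
  have h4 : ip (g * h) (g * h) = (al g * al h + ip g h) ^ 2 - 1 := by linarith
  rw [gam, gam, ip_mul_left, h4]
  have e2 : ip g g = al g ^ 2 - 1 := by linarith
  have e3 : ip h h = al h ^ 2 - 1 := by linarith
  rw [e2, e3]; ring

lemma ip_comm (g h : SL2R) : ip g h = ip h g := by simp only [ip]; ring
lemma gam_comm (g h : SL2R) : gam g h = gam h g := by simp only [gam, ip_comm g h]; ring

lemma ip_Sc {la : ℝ} {y x : SL2R} (H : Sc la y x) (z : SL2R) : ip y z = la * ip x z := by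
  obtain ⟨h1, h2, h3⟩ := H
  simp only [ip, h1, h2, h3]; ring

lemma gam_Sc {la : ℝ} {y x : SL2R} (H : Sc la y x) (z : SL2R) : gam y z = la ^ 2 * gam x z := by
  rw [gam, gam, ip_Sc H, ip_Sc H, ip_comm x y, ip_Sc H]; ring

lemma Sc_neg (x : SL2R) : Sc (-1) (-x) x := by
  refine ⟨?_, ?_, ?_⟩ <;> simp [be_neg, pp_neg, rr_neg]

lemma Sc_inv (x : SL2R) : Sc (-1) x⁻¹ x := by
  refine ⟨?_, ?_, ?_⟩ <;> simp [be_inv, pp_inv, rr_inv]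

lemma dd_Sc {la : ℝ} {y x : SL2R} (H : Sc la y x) : dd y = la ^ 2 * dd x := by
  obtain ⟨h1, h2, h3⟩ := H
  simp only [dd, h2, h3]; ring

/-- parallel vectors -/
lemma Sc_of_cross {x y : SL2R} (hx : nu x ≠ 0) (h1 : pp x * rr y = rr x * pp y)
    (h2 : be x * rr y = rr x * be y) (h3 : be x * pp y = pp x * be y) : ∃ la, Sc la y x := by
  refine ⟨(be x * be y + pp x * pp y + rr x * rr y) / nu x, ?_, ?_, ?_⟩
  · field_simp; simp only [nu]; linear_combination (-pp x) * h3 - rr x * h2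
  · field_simp; simp only [nu]; linear_combination (be x) * h3 - rr x * h1
  · field_simp; simp only [nu]; linear_combination (be x) * h2 + pp x * h1

lemma comm_cross {x y : SL2R} (h : x * y = y * x) : pp x * rr y = rr x * pp y ∧
    be x * rr y = rr x * be y ∧ be x * pp y = pp x * be y := by
  have h1 := congrArg be h
  have h2 := congrArg pp h
  have h3 := congrArg rr h
  simp only [be_mul, pp_mul, rr_mul] at h1 h2 h3
  refine ⟨by linarith, by linarith, by linarith⟩

lemma nu_zero_iff (x : SL2R) : nu x = 0 ↔ be x = 0 ∧ pp x = 0 ∧ rr x = 0 := by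
  constructor
  · intro h
    simp only [nu] at h
    refine ⟨?_, ?_, ?_⟩ <;> nlinarith [sq_nonneg (be x), sq_nonneg (pp x), sq_nonneg (rr x)]
  · rintro ⟨h1, h2, h3⟩
    simp [nu, h1, h2, h3]

lemma nu_nonneg (x : SL2R) : 0 ≤ nu x := by simp only [nu]; positivity

/-- for elliptic `g`, `gam g h` is nonnegative and vanishes only if `g`, `h` commute. -/
lemma gam_pos {g h : SL2R} (hg : ip g g < 0) (hc : g * h ≠ h * g) : 0 < gam g h := by
  by_contra hcon
  push Not at hcon
  apply hc
  set u1 := pp g * be h - pp h * be g with hu1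
  set u2 := rr g * be h - rr h * be g with hu2
  set k := pp g * rr h - rr g * pp h with hk
  have e : gam g h = 4 * (u1 ^ 2 + u2 ^ 2 - k ^ 2) := by
    simp only [gam, ip, hu1, hu2, hk]; ring
  have e2 : be g * k = rr g * u1 - pp g * u2 := by simp only [hu1, hu2, hk]; ring
  have hg' : pp g ^ 2 + rr g ^ 2 < be g ^ 2 := by simp only [ip] at hg; nlinarith
  have e3 : (be g * k) ^ 2 ≤ (pp g ^ 2 + rr g ^ 2) * (u1 ^ 2 + u2 ^ 2) := by
    rw [e2]; nlinarith [sq_nonneg (pp g * u1 + rr g * u2)]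
  have hk2 : u1 ^ 2 + u2 ^ 2 ≤ k ^ 2 := by linarith
  have e4 : be g ^ 2 * (u1 ^ 2 + u2 ^ 2) ≤ (pp g ^ 2 + rr g ^ 2) * (u1 ^ 2 + u2 ^ 2) := by
    nlinarith [sq_nonneg (be g)]
  have e5 : u1 ^ 2 + u2 ^ 2 = 0 := by
    by_contra hne
    have : 0 < u1 ^ 2 + u2 ^ 2 := lt_of_le_of_ne (by positivity) (Ne.symm hne)
    nlinarith
  have hb : be g ≠ 0 := by
    intro h0; rw [h0] at hg'; nlinarith [sq_nonneg (pp g), sq_nonneg (rr g)]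
  have f1 : u1 = 0 := by nlinarith [sq_nonneg u1, sq_nonneg u2]
  have f2 : u2 = 0 := by nlinarith [sq_nonneg u1, sq_nonneg u2]
  have f3 : k = 0 := by
    have : be g * k = 0 := by rw [e2, f1, f2]; ring
    exact (mul_eq_zero.mp this).resolve_left hb
  apply ext_coord
  · rw [al_mul, al_mul]; ring
  · rw [be_mul, be_mul]; linarith
  · rw [pp_mul, pp_mul]; linarith
  · rw [rr_mul, rr_mul]; linarith

/-- bounded subsets of `G` are finite -/
def Fin' (G : Subgroup SL2R) : Prop :=
  ∀ R : ℝ, {g : SL2R | g ∈ G ∧ |al g| ≤ R ∧ |be g| ≤ R ∧ |pp g| ≤ R ∧ |rr g| ≤ R}.Finite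

/-- Jorgensen's inequality for an elliptic generator -/
lemma jorg {G : Subgroup SL2R} (hG : Fin' G) {A B : SL2R} (hA : A ∈ G) (hB : B ∈ G)
    (he : ip A A < 0) (hg : 0 < gam A B) : 1 ≤ gam A B - 4 * ip A A := by
  by_contra hcon
  push Not at hcon
  set u0 := gam A B
  let S : Set SL2R := {g | g ∈ G ∧ al g = al A ∧ ip g g = ip A A ∧ 0 < gam A g ∧ gam A g ≤ u0}
  have hne : S.Nonempty := by
    refine ⟨B * A * B⁻¹, G.mul_mem (G.mul_mem hB hA) (G.inv_mem hB), al_conj _ _, ip_conj _ _, ?_, ?_⟩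
    · rw [gam_conj]; apply mul_pos hg; linarith
    · rw [gam_conj]; nlinarith
  have hfin : S.Finite := by
    have hbb : |be A| > √(dd A) := by
      rw [gt_iff_lt, ← Real.sqrt_sq_eq_abs]
      apply Real.sqrt_lt_sqrt
      · simp only [dd]; positivity
      · simp only [ip] at he; simp only [dd]; linarith
    set ep := |be A| - √(dd A) with hep
    have hep0 : 0 < ep := by linarith
    set R := 1 + (√(u0 / 4 + ip A A ^ 2)) / ep with hR
    have hq : 0 ≤ (√(u0 / 4 + ip A A ^ 2)) / ep := by positivity
    apply (hG R).subset
    rintro g ⟨h1, h2, h3, h4, h5⟩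
    have hal : al A ^ 2 < 1 := by rw [al_sq]; linarith
    have hD : dd g ≤ be g ^ 2 := by
      simp only [ip] at h3 he; simp only [dd]; nlinarith
    have hsD : √(dd g) ≤ |be g| := by
      rw [← Real.sqrt_sq_eq_abs]; exact Real.sqrt_le_sqrt hD
    have hbe : |be g| ≤ (√(u0 / 4 + ip A A ^ 2)) / ep := by
      rw [le_div_iff₀ hep0]
      have i1 : |ip A g| ≤ √(u0 / 4 + ip A A ^ 2) := by
        apply Real.abs_le_sqrt
        have : gam A g = 4 * (ip A g ^ 2 - ip A A * ip g g) := rfl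
        rw [h3] at this
        nlinarith
      have i2 : |be A| * |be g| - √(dd A) * √(dd g) ≤ |ip A g| := by
        have : |pp A * pp g + rr A * rr g| ≤ √(dd A) * √(dd g) := by
          rw [← Real.sqrt_mul (by simp only [dd]; positivity)]
          apply Real.abs_le_sqrt
          simp only [dd]
          nlinarith [sq_nonneg (pp A * rr g - rr A * pp g)]
        have h7 : |be A| * |be g| = |be A * be g| := (abs_mul _ _).symm
        rw [h7]
        have : be A * be g = (pp A * pp g + rr A * rr g) - ip A g := by simp only [ip]; ring
        rw [this]
        have := abs_sub (pp A * pp g + rr A * rr g) (ip A g)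
        linarith
      have i3 : √(dd A) * √(dd g) ≤ √(dd A) * |be g| :=
        mul_le_mul_of_nonneg_left hsD (Real.sqrt_nonneg _)
      simp only [hep]
      nlinarith
    have hdd1 : pp g ^ 2 ≤ dd g := by simp only [dd]; nlinarith [sq_nonneg (rr g)]
    have hdd2 : rr g ^ 2 ≤ dd g := by simp only [dd]; nlinarith [sq_nonneg (pp g)]
    refine ⟨h1, ?_, ?_, ?_, ?_⟩
    · rw [h2]
      have : |al A| ≤ 1 := abs_le_one_iff_mul_self_le_one.mpr (by nlinarith)
      linarith
    · linarith
    · have := sq_le_sq.mp (hdd1.trans hD); linarith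
    · have := sq_le_sq.mp (hdd2.trans hD); linarith
  obtain ⟨g, ⟨g1, g2, g3, g4, g5⟩, hmin⟩ := Set.exists_min_image S (fun g => gam A g) hfin hne
  have hlt : gam A (g * A * g⁻¹) < gam A g := by rw [gam_conj]; nlinarith
  have hp : 0 < gam A (g * A * g⁻¹) := by rw [gam_conj]; apply mul_pos g4; linarith
  have := hmin (g * A * g⁻¹) ⟨G.mul_mem (G.mul_mem g1 hA) (G.inv_mem g1), al_conj _ _,
    ip_conj _ _, hp, by linarith⟩
  linarith


lemma row_bound (x y m1 m2 m3 m4 c : ℝ) (hdet : m1 * m4 - m2 * m3 = 1) (hc : 1 ≤ c)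
    (hN : c * (m1 ^ 2 + m2 ^ 2 + m3 ^ 2 + m4 ^ 2) ≤ c ^ 2 + 1) :
    (x * m1 + y * m3) ^ 2 + (x * m2 + y * m4) ^ 2 ≤ c * (x ^ 2 + y ^ 2) := by
  set E := m1 ^ 2 + m2 ^ 2 with hE
  set H := m3 ^ 2 + m4 ^ 2 with hH
  set F := m1 * m3 + m2 * m4 with hF
  have h1 : E * H - F ^ 2 = 1 := by
    have : E * H - F ^ 2 = (m1 * m4 - m2 * m3) ^ 2 := by simp only [hE, hH, hF]; ring
    rw [this, hdet]; ring
  have h2 : F ^ 2 ≤ (c - E) * (c - H) := by nlinarith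
  have h3 : 0 ≤ (c - E) + (c - H) := by
    have : c * (E + H) ≤ c * (2 * c) := by nlinarith
    have := le_of_mul_le_mul_left this (by linarith)
    linarith
  have h4 : 0 ≤ (c - E) * (c - H) := (sq_nonneg F).trans h2
  have h5 : 0 ≤ c - E := by
    by_contra hh; push Not at hh
    have : 0 < c - H := by linarith
    nlinarith
  have h6 : 0 ≤ c - H := by
    by_contra hh; push Not at hh
    have : 0 < c - E := by linarith
    nlinarith
  have key : 0 ≤ (c - E) * x ^ 2 - 2 * F * (x * y) + (c - H) * y ^ 2 := by
    rcases h5.eq_or_lt with h0 | h0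
    · rw [← h0] at h2 ⊢
      have : F = 0 := by nlinarith [sq_nonneg F]
      rw [this]; nlinarith [sq_nonneg y]
    · have : 0 ≤ (c - E) * ((c - E) * x ^ 2 - 2 * F * (x * y) + (c - H) * y ^ 2) := by
        nlinarith [sq_nonneg ((c - E) * x - F * y), mul_nonneg (sub_nonneg.2 h2) (sq_nonneg y)]
      exact nonneg_of_mul_nonneg_right this h0
  have : c * (x ^ 2 + y ^ 2) - ((x * m1 + y * m3) ^ 2 + (x * m2 + y * m4) ^ 2)
      = (c - E) * x ^ 2 - 2 * F * (x * y) + (c - H) * y ^ 2 := by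
    simp only [hE, hH, hF]; ring
  linarith

lemma opR (a b p r : ℝ) (n : SL2R) (c : ℝ) (hc : 1 ≤ c)
    (hN : c * (2 * (1 + 2 * dd n)) ≤ c ^ 2 + 1) :
    (a * al n - b * be n + p * pp n + r * rr n) ^ 2 +
    (a * be n + b * al n + p * rr n - r * pp n) ^ 2 +
    (a * pp n + p * al n + b * rr n - r * be n) ^ 2 +
    (a * rr n + r * al n - b * pp n + p * be n) ^ 2 ≤ c * (a ^ 2 + b ^ 2 + p ^ 2 + r ^ 2) := by
  have hd := det_eq n
  have e : (al n + pp n) ^ 2 + (be n + rr n) ^ 2 + (rr n - be n) ^ 2 + (al n - pp n) ^ 2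
      = 2 * (1 + 2 * dd n) := by simp only [dd]; linear_combination 2 * hd
  have h1 := row_bound (a + p) (b + r) (al n + pp n) (be n + rr n) (rr n - be n) (al n - pp n) c
    (by linear_combination hd) hc (by rw [e]; exact hN)
  have h2 := row_bound (r - b) (a - p) (al n + pp n) (be n + rr n) (rr n - be n) (al n - pp n) c
    (by linear_combination hd) hc (by rw [e]; exact hN)
  nlinarith

lemma opL (a b p r : ℝ) (n : SL2R) (c : ℝ) (hc : 1 ≤ c)
    (hN : c * (2 * (1 + 2 * dd n)) ≤ c ^ 2 + 1) :
    (al n * a - be n * b + pp n * p + rr n * r) ^ 2 +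
    (al n * b + be n * a + pp n * r - rr n * p) ^ 2 +
    (al n * p + pp n * a + be n * r - rr n * b) ^ 2 +
    (al n * r + rr n * a - be n * p + pp n * b) ^ 2 ≤ c * (a ^ 2 + b ^ 2 + p ^ 2 + r ^ 2) := by
  have hi : dd n⁻¹ = dd n := by simp only [dd, pp_inv, rr_inv]; ring
  have := opR a (-b) (-p) (-r) n⁻¹ c hc (by rw [hi]; exact hN)
  simp only [al_inv, be_inv, pp_inv, rr_inv] at this
  nlinarith

lemma nu_conj_le (T g : SL2R) (hT : dd T ≤ 0.0175) : nu (T * g * T⁻¹) ≤ 1.7161 * nu g := by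
  have hi : dd T⁻¹ = dd T := by simp only [dd, pp_inv, rr_inv]; ring
  have h1 := opL 0 (be g) (pp g) (rr g) T 1.31 (by norm_num) (by nlinarith)
  have h2 := opR (al T * 0 - be T * be g + pp T * pp g + rr T * rr g)
    (al T * be g + be T * 0 + pp T * rr g - rr T * pp g)
    (al T * pp g + pp T * 0 + be T * rr g - rr T * be g)
    (al T * rr g + rr T * 0 - be T * pp g + pp T * be g) T⁻¹ 1.31 (by norm_num)
    (by rw [hi]; nlinarith)
  have hb : be (T * g * T⁻¹) = (al T * 0 - be T * be g + pp T * pp g + rr T * rr g) * be T⁻¹ +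
      (al T * be g + be T * 0 + pp T * rr g - rr T * pp g) * al T⁻¹ +
      (al T * pp g + pp T * 0 + be T * rr g - rr T * be g) * rr T⁻¹ -
      (al T * rr g + rr T * 0 - be T * pp g + pp T * be g) * pp T⁻¹ := by
    simp only [al_mul, be_mul, pp_mul, rr_mul, al_inv, be_inv, pp_inv, rr_inv]; ring
  have hp : pp (T * g * T⁻¹) = (al T * 0 - be T * be g + pp T * pp g + rr T * rr g) * pp T⁻¹ +
      (al T * pp g + pp T * 0 + be T * rr g - rr T * be g) * al T⁻¹ +
      (al T * be g + be T * 0 + pp T * rr g - rr T * pp g) * rr T⁻¹ -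
      (al T * rr g + rr T * 0 - be T * pp g + pp T * be g) * be T⁻¹ := by
    simp only [al_mul, be_mul, pp_mul, rr_mul, al_inv, be_inv, pp_inv, rr_inv]; ring
  have hr : rr (T * g * T⁻¹) = (al T * 0 - be T * be g + pp T * pp g + rr T * rr g) * rr T⁻¹ +
      (al T * rr g + rr T * 0 - be T * pp g + pp T * be g) * al T⁻¹ -
      (al T * be g + be T * 0 + pp T * rr g - rr T * pp g) * pp T⁻¹ +
      (al T * pp g + pp T * 0 + be T * rr g - rr T * be g) * be T⁻¹ := by
    simp only [al_mul, be_mul, pp_mul, rr_mul, al_inv, be_inv, pp_inv, rr_inv]; ring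
  rw [← hb, ← hp, ← hr] at h2
  have : nu (T * g * T⁻¹) ≤ 1.31 * (1.31 * (0 ^ 2 + be g ^ 2 + pp g ^ 2 + rr g ^ 2)) := by
    simp only [nu]
    refine le_trans ?_ (h2.trans (mul_le_mul_of_nonneg_left h1 (by norm_num)))
    nlinarith [sq_nonneg ((al T * 0 - be T * be g + pp T * pp g + rr T * rr g) * al T⁻¹ -
      (al T * be g + be T * 0 + pp T * rr g - rr T * pp g) * be T⁻¹ +
      (al T * pp g + pp T * 0 + be T * rr g - rr T * be g) * pp T⁻¹ +
      (al T * rr g + rr T * 0 - be T * pp g + pp T * be g) * rr T⁻¹)]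
  simp only [nu] at this ⊢
  linarith

set_option maxHeartbeats 1000000 in
/-- the commutator estimate -/
lemma comm_est (g k : SL2R) (hg : nu g ≤ 0.035) (hk : nu k ≤ 1.7161 * nu g) :
    (al (g * k * (k * g)⁻¹) - 1) ^ 2 + nu (g * k * (k * g)⁻¹) ≤ 0.8 * nu g := by
  have hg0 := nu_nonneg g
  have hk0 := nu_nonneg k
  have hdg : dd g ≤ nu g := by simp only [dd, nu]; nlinarith [sq_nonneg (be g)]
  have hdk : dd k ≤ nu k := by simp only [dd, nu]; nlinarith [sq_nonneg (be k)]
  -- size of k * g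
  have h1 := opR (al k) (be k) (pp k) (rr k) g 1.46 (by norm_num) (by nlinarith)
  rw [← al_mul, ← be_mul, ← pp_mul, ← rr_mul] at h1
  set n := k * g with hn
  have hdk4 : al k ^ 2 + be k ^ 2 + pp k ^ 2 + rr k ^ 2 ≤ 1.1203 := by
    have := det_eq k; simp only [dd] at hdk; nlinarith
  set N := al n ^ 2 + be n ^ 2 + pp n ^ 2 + rr n ^ 2 with hN
  have hN1 : N ≤ 1.636 := by linarith
  -- W
  set wb := 2 * (pp g * rr k - rr g * pp k) with hwb
  set wp := 2 * (be g * rr k - rr g * be k) with hwp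
  set wr := 2 * (pp g * be k - be g * pp k) with hwr
  have hW : wb ^ 2 + wp ^ 2 + wr ^ 2 ≤ 4 * (nu g * nu k) := by
    have : 4 * (nu g * nu k) - (wb ^ 2 + wp ^ 2 + wr ^ 2) =
      4 * (be g * be k + pp g * pp k + rr g * rr k) ^ 2 := by
      simp only [nu, hwb, hwp, hwr]; ring
    nlinarith [sq_nonneg (be g * be k + pp g * pp k + rr g * rr k)]
  have hd := det_eq n
  have a1 : al (g * k) = al n := by rw [hn, al_mul, al_mul]; ring
  have a2 : be (g * k) = be n + wb := by rw [hn, be_mul, be_mul]; ring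
  have a3 : pp (g * k) = pp n + wp := by rw [hn, pp_mul, pp_mul]; ring
  have a4 : rr (g * k) = rr n + wr := by rw [hn, rr_mul, rr_mul]; ring
  have b1 : al (g * k * n⁻¹) - 1 = wb * be n - wp * pp n - wr * rr n := by
    rw [al_mul, al_inv, be_inv, pp_inv, rr_inv, a1, a2, a3, a4]
    linear_combination hd
  have b2 : be (g * k * n⁻¹) = wb * al n - wp * rr n + wr * pp n := by
    rw [be_mul, al_inv, be_inv, pp_inv, rr_inv, a1, a2, a3, a4]; ring
  have b3 : pp (g * k * n⁻¹) = wp * al n - wb * rr n + wr * be n := by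
    rw [pp_mul, al_inv, be_inv, pp_inv, rr_inv, a1, a2, a3, a4]; ring
  have b4 : rr (g * k * n⁻¹) = wr * al n + wb * pp n - wp * be n := by
    rw [rr_mul, al_inv, be_inv, pp_inv, rr_inv, a1, a2, a3, a4]; ring
  have hCS : (al (g * k * n⁻¹) - 1) ^ 2 + nu (g * k * n⁻¹) ≤
      2 * N * (wb ^ 2 + wp ^ 2 + wr ^ 2) := by
    simp only [nu]; rw [b1, b2, b3, b4]
    have : 2 * N * (wb ^ 2 + wp ^ 2 + wr ^ 2) - ((wb * be n - wp * pp n - wr * rr n) ^ 2 +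
      ((wb * al n - wp * rr n + wr * pp n) ^ 2 + (wp * al n - wb * rr n + wr * be n) ^ 2 +
      (wr * al n + wb * pp n - wp * be n) ^ 2)) = 
      (wb * al n + wp * rr n - wr * pp n) ^ 2 + (wp * al n + wb * rr n + wr * be n) ^ 2 +
      (wr * al n - wb * pp n - wp * be n) ^ 2 + (wb * be n + wp * pp n + wr * rr n) ^ 2 := by
      simp only [hN]; ring
    have h2 : 0 ≤ (wb * al n + wp * rr n - wr * pp n) ^ 2 + (wp * al n + wb * rr n + wr * be n) ^ 2 +
      (wr * al n - wb * pp n - wp * be n) ^ 2 + (wb * be n + wp * pp n + wr * rr n) ^ 2 := by positivity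
    linarith
  have h5 : nu g * nu k ≤ nu g * (1.7161 * 0.035) := by
    apply mul_le_mul_of_nonneg_left _ hg0; linarith
  have hw0 : 0 ≤ wb ^ 2 + wp ^ 2 + wr ^ 2 := by positivity
  calc _ ≤ _ := hCS
    _ ≤ 2 * 1.636 * (wb ^ 2 + wp ^ 2 + wr ^ 2) := by
      apply mul_le_mul_of_nonneg_right _ hw0; linarith
    _ ≤ _ := by linarith

def Par (T g : SL2R) : Prop := ∃ la, Sc la (T * g * T⁻¹) g

lemma zass {G : Subgroup SL2R} (hG : Fin' G) {A B : SL2R} (hA : A ∈ G) (hB : B ∈ G)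
    (hF : ∀ g, nu g ≠ 0 → Par A g → Par B g → False) (dA : dd A ≤ 0.0175) (dB : dd B ≤ 0.0175)
    {T : SL2R} (hT : T ∈ G) (hnu : nu T ≤ 0.035) : nu T = 0 := by
  by_contra hne
  let S : Set SL2R := {g | g ∈ G ∧ nu g ≠ 0 ∧ nu g ≤ 0.035}
  have hfin : S.Finite := by
    apply (hG 2).subset
    rintro g ⟨h1, h2, h3⟩
    simp only [nu] at h3
    have hd := det_eq g
    have q0 := sq_nonneg (be g)
    have q1 := sq_nonneg (pp g)
    have q2 := sq_nonneg (rr g)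
    refine ⟨h1, ?_, ?_, ?_, ?_⟩ <;> apply abs_le_of_sq_le_sq <;> nlinarith
  obtain ⟨g, ⟨g1, g2, g3⟩, hmin⟩ := Set.exists_min_image S nu hfin ⟨T, hT, hne, hnu⟩
  have key : ∀ K ∈ G, dd K ≤ 0.0175 → Par K g := by
    intro K hK dK
    set k := K * g * K⁻¹ with hk
    have hkG : k ∈ G := G.mul_mem (G.mul_mem hK g1) (G.inv_mem hK)
    have hest := comm_est g k g3 (nu_conj_le K g dK)
    set C := g * k * (k * g)⁻¹ with hC
    have hCG : C ∈ G := G.mul_mem (G.mul_mem g1 hkG) (G.inv_mem (G.mul_mem hkG g1))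
    have gpos : 0 < nu g := lt_of_le_of_ne (nu_nonneg g) (Ne.symm g2)
    have hC0 : nu C = 0 := by
      by_contra hh
      have := hmin C ⟨hCG, hh, by nlinarith [sq_nonneg (al C - 1)]⟩
      nlinarith [sq_nonneg (al C - 1)]
    obtain ⟨c1, c2, c3⟩ := (nu_zero_iff C).1 hC0
    have hd := det_eq C
    rw [c1, c2, c3] at hd
    have : al C = 1 := by
      have h0 : (al C - 1) * (al C + 1) = 0 := by linarith
      rcases mul_eq_zero.1 h0 with h | h
      · linarith
      · exfalso
        have : al C = -1 := by linarith
        rw [this, hC0] at hest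
        linarith
    have hC1 : C = 1 := ext_coord (by rw [this, al_one]) (by rw [c1, be_one])
      (by rw [c2, pp_one]) (by rw [c3, rr_one])
    have hcomm : g * k = k * g := by rwa [hC, mul_inv_eq_one] at hC1
    obtain ⟨x1, x2, x3⟩ := comm_cross hcomm
    exact Sc_of_cross g2 x1 x2 x3
  exact hF g g2 (key A hA dA) (key B hB dB)


lemma pow_coord (A : SL2R) (t : ℝ) (ht : al A = cos t) (hs : sin t ≠ 0) (k : ℕ) :
    al (A ^ k) = cos (k * t) ∧ sin t * be (A ^ k) = sin (k * t) * be A ∧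
    sin t * pp (A ^ k) = sin (k * t) * pp A ∧ sin t * rr (A ^ k) = sin (k * t) * rr A := by
  induction k with
  | zero => simp [al_one, be_one, pp_one, rr_one]
  | succ k ih =>
    obtain ⟨h1, h2, h3, h4⟩ := ih
    have hd := det_eq A
    have hsc := sin_sq_add_cos_sq t
    have e : ((k + 1 : ℕ) : ℝ) * t = k * t + t := by push_cast; ring
    rw [pow_succ, e, cos_add, sin_add]
    refine ⟨?_, ?_, ?_, ?_⟩
    · apply mul_left_cancel₀ hs
      rw [al_mul, h1, ht]
      rw [ht] at hd
      linear_combination (-be A) * h2 + pp A * h3 + rr A * h4 + sin (k * t) * (hsc - hd)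
    · rw [be_mul, h1, ht]; linear_combination cos t * h2 + rr A * h3 - pp A * h4
    · rw [pp_mul, h1, ht]; linear_combination cos t * h3 + rr A * h2 - be A * h4
    · rw [rr_mul, h1, ht]; linear_combination cos t * h4 - pp A * h2 + be A * h3

lemma prim {G : Subgroup SL2R} (hm1 : -1 ∈ G) (hG : Fin' G) {A : SL2R} (hA : A ∈ G)
    (he : ip A A < 0) : ∃ n p : ℕ, 2 ≤ n ∧ 0 < p ∧ p < n ∧ Nat.Coprime p n ∧
      al A = cos (p * (π / n)) ∧ ∃ A' ∈ G, ∃ ka : ℝ, 0 < ka ∧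
        ka * sin (p * (π / n)) = sin (π / n) ∧ al A' = cos (π / n) ∧ Sc ka A' A := by
  have hsq := al_sq A
  have hlt : al A ^ 2 < 1 := by linarith
  have habs := abs_lt.1 ((sq_lt_one_iff_abs_lt_one _).1 hlt)
  set t := arccos (al A) with ht
  have hcos : al A = cos t := (cos_arccos habs.1.le habs.2.le).symm
  have ht0 : 0 < t := arccos_pos.2 habs.2
  have htp : t < π := by
    rcases (arccos_le_pi (al A)).lt_or_eq with h | h
    · exact h
    · exfalso; have : t = π := h
      rw [this, cos_pi] at hcos; linarith
  have hs : 0 < sin t := sin_pos_of_pos_of_lt_pi ht0 htp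
  have hpow := pow_coord A t hcos hs.ne'
  have bd : ∀ x y : ℝ, ∀ k : ℕ, sin t * y = sin (k * t) * x → |y| ≤ |x| / sin t := by
    intro x y k h
    rw [le_div_iff₀ hs]
    have h' := congrArg abs h
    rw [abs_mul, abs_mul, abs_of_pos hs] at h'
    have := mul_le_mul_of_nonneg_right (abs_sin_le_one (k * t)) (abs_nonneg x)
    linarith
  have hfin : (Submonoid.powers A : Set SL2R).Finite := by
    apply (hG (1 + |be A| / sin t + |pp A| / sin t + |rr A| / sin t)).subset
    rintro _ ⟨k, rfl⟩
    obtain ⟨h1, h2, h3, h4⟩ := hpow k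
    have := bd _ _ _ h2
    have := bd _ _ _ h3
    have := bd _ _ _ h4
    have q1 : 0 ≤ |be A| / sin t := by positivity
    have q2 : 0 ≤ |pp A| / sin t := by positivity
    have q3 : 0 ≤ |rr A| / sin t := by positivity
    have q4 : |al (A ^ k)| ≤ 1 := by rw [h1]; exact abs_cos_le_one _
    refine ⟨G.pow_mem hA k, ?_, ?_, ?_, ?_⟩ <;> simp only [] <;> linarith
  obtain ⟨k, hk0, hk⟩ := isOfFinOrder_iff_pow_eq_one.1 (finite_powers.1 hfin)
  have hc1 : cos (k * t) = 1 := by rw [← (hpow k).1, hk, al_one]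
  obtain ⟨m, hm⟩ := (cos_eq_one_iff _).1 hc1
  have hkR : (0 : ℝ) < k := by exact_mod_cast hk0
  -- rational angle
  let q : ℚ := 2 * m / k
  have hq : t = (q : ℝ) * π := by
    simp only [q]; push_cast; field_simp; linarith
  have hq0 : 0 < q := by
    have : (0 : ℝ) < q := by
      by_contra h; push Not at h
      have := mul_nonpos_of_nonpos_of_nonneg h pi_pos.le
      linarith
    exact_mod_cast this
  have hq1 : q < 1 := by
    have : (q : ℝ) < 1 := by
      by_contra h; push Not at h
      have := mul_le_mul_of_nonneg_right h pi_pos.le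
      linarith
    exact_mod_cast this
  have hnum : 0 < q.num := Rat.num_pos.2 hq0
  obtain ⟨p, hp⟩ := Int.eq_ofNat_of_zero_le hnum.le
  have hp0 : 0 < p := by omega
  have hden : 0 < q.den := q.den_pos
  have hpn : p < q.den := by
    have := Rat.num_lt_denom_iff.2 hq1
    omega
  have hcop : Nat.Coprime p q.den := by
    have := q.reduced
    rw [hp] at this
    simpa using this
  have hn2 : 2 ≤ q.den := by omega
  generalize hn : q.den = n at *
  have hnR : (0 : ℝ) < n := by exact_mod_cast hden
  have htt : t = p * (π / n) := by
    rw [hq]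
    have : (q : ℝ) = (q.num : ℝ) / (q.den : ℝ) := by exact_mod_cast (Rat.num_div_den q).symm
    rw [this, hp, hn]; push_cast; field_simp
  obtain ⟨j, hj⟩ := Nat.exists_mul_mod_eq_one_of_coprime hcop (by omega : 1 < n)
  obtain ⟨l, hl⟩ : ∃ l, p * j = 1 + n * l := ⟨p * j / n, by
    have := Nat.mod_add_div (p * j) n
    omega⟩
  have hjt : (j : ℝ) * t = π / n + l * π := by
    have : (p : ℝ) * j = 1 + n * l := by exact_mod_cast hl
    rw [htt]; field_simp; linear_combination this
  have hsn : 0 < sin (π / n) := by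
    apply sin_pos_of_pos_of_lt_pi (by positivity)
    rw [div_lt_iff₀ hnR]
    have : (2 : ℝ) ≤ n := by exact_mod_cast hn2
    nlinarith [pi_pos]
  obtain ⟨h1, h2, h3, h4⟩ := hpow j
  rw [hjt, cos_add_nat_mul_pi] at h1
  rw [hjt, sin_add_nat_mul_pi] at h2 h3 h4
  refine ⟨n, p, hn2, hp0, hpn, hcop, by rw [← htt]; exact hcos, ?_⟩
  rw [← htt]
  rcases neg_one_pow_eq_or ℝ l with hl1 | hl1
  · rw [hl1] at h1 h2 h3 h4
    refine ⟨A ^ j, G.pow_mem hA j, sin (π / n) / sin t, by positivity, by field_simp,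
      by linarith, ?_, ?_, ?_⟩ <;> field_simp <;> linarith
  · rw [hl1] at h1 h2 h3 h4
    refine ⟨-1 * A ^ j, G.mul_mem hm1 (G.pow_mem hA j), sin (π / n) / sin t, by positivity,
      by field_simp, ?_, ?_, ?_, ?_⟩ <;> rw [neg_one_mul]
    · rw [al_neg]; linarith
    · rw [be_neg]; field_simp; linarith
    · rw [pp_neg]; field_simp; linarith
    · rw [rr_neg]; field_simp; linarith

lemma sin_le_sin' {x y : ℝ} (hx : 0 ≤ x) (hxy : x ≤ y) (hy : y ≤ π - x) : sin x ≤ sin y := by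
  rcases le_total y (π / 2) with h | h
  · exact sin_le_sin_of_le_of_le_pi_div_two (by linarith [pi_pos]) h hxy
  · rw [← sin_pi_sub y]
    exact sin_le_sin_of_le_of_le_pi_div_two (by linarith [pi_pos]) (by linarith) (by linarith)

lemma sin_pi_div_pos {n : ℕ} (hn : 2 ≤ n) : 0 < sin (π / n) := by
  have hR : (2 : ℝ) ≤ n := by exact_mod_cast hn
  apply sin_pos_of_pos_of_lt_pi (by positivity)
  rw [div_lt_iff₀ (by linarith)]
  nlinarith [pi_pos]

lemma ka_le_one {n p : ℕ} (hn : 2 ≤ n) (hp : 0 < p) (hpn : p < n) {ka : ℝ}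
    (h : ka * sin (p * (π / n)) = sin (π / n)) (hk : 0 < ka) : ka ≤ 1 := by
  have hR : (2 : ℝ) ≤ n := by exact_mod_cast hn
  have hp1 : (1 : ℝ) ≤ p := by exact_mod_cast hp
  have hp2 : (p : ℝ) + 1 ≤ n := by exact_mod_cast hpn
  have hq : 0 < π / n := by positivity
  have hqn : (n : ℝ) * (π / n) = π := by field_simp
  have h1 : sin (π / n) ≤ sin (p * (π / n)) := by
    apply sin_le_sin' hq.le
    · nlinarith
    · nlinarith
  have := sin_pi_div_pos hn
  by_contra hh; push Not at hh
  nlinarith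

lemma ka_cos_le {n p : ℕ} (hn : 2 ≤ n) (hp : 2 ≤ p) (hpn : p + 2 ≤ n) {ka : ℝ}
    (h : ka * sin (p * (π / n)) = sin (π / n)) (hk : 0 < ka) : ka * (2 * cos (π / n)) ≤ 1 := by
  have hp1 : (2 : ℝ) ≤ p := by exact_mod_cast hp
  have hp2 : (p : ℝ) + 2 ≤ n := by exact_mod_cast hpn
  have hq : 0 < π / n := by
    have : (0 : ℝ) < n := by linarith
    positivity
  have hqn : (n : ℝ) * (π / n) = π := by
    have : (0 : ℝ) < n := by linarith
    field_simp
  have h1 : sin (2 * (π / n)) ≤ sin (p * (π / n)) := by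
    apply sin_le_sin' (by linarith)
    · nlinarith
    · nlinarith
  rw [sin_two_mul] at h1
  have := sin_pi_div_pos hn
  have h2 := mul_le_mul_of_nonneg_left h1 hk.le
  rw [h] at h2
  by_contra hh; push Not at hh
  nlinarith


def ww : ℝ := cos (π / 7)
def de : ℝ := (4 * ww ^ 2 - 3) / (8 * ww + 7)

lemma ww_lb0 : (0.7 : ℝ) < ww := by
  have h : cos (π / 4) < cos (π / 7) :=
    cos_lt_cos_of_nonneg_of_le_pi_div_two (by positivity) (by linarith [pi_pos])
      (by linarith [pi_pos])
  rw [cos_pi_div_four] at h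
  have h2 : (1.4 : ℝ) < √2 := by
    rw [lt_sqrt (by norm_num)]; norm_num
  unfold ww; linarith

lemma ww_cubic : 8 * ww ^ 3 - 4 * ww ^ 2 - 4 * ww + 1 = 0 := by
  have h1 : cos (2 * (2 * (π / 7))) = -cos (3 * (π / 7)) := by
    rw [← cos_pi_sub]; congr 1; ring
  rw [cos_two_mul, cos_two_mul, cos_three_mul] at h1
  have h2 : (ww + 1) * (8 * ww ^ 3 - 4 * ww ^ 2 - 4 * ww + 1) = 0 := by
    unfold ww; linear_combination h1
  rcases mul_eq_zero.1 h2 with h | h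
  · linarith [ww_lb0]
  · exact h

lemma ww_lb : (0.9 : ℝ) < ww := by
  by_contra h; push Not at h
  have h0 := ww_lb0
  have h1 := ww_cubic
  nlinarith [mul_nonneg (sub_nonneg.2 h) (sub_nonneg.2 h0.le), mul_nonneg (mul_nonneg (sub_nonneg.2 h) (sub_nonneg.2 h0.le)) (by linarith : 0 ≤ ww)]

lemma ww_ub : ww < 0.901 := by
  by_contra h; push Not at h
  have h1 := ww_cubic
  nlinarith [mul_nonneg (sub_nonneg.2 h) (sub_nonneg.2 h), mul_nonneg (mul_nonneg (sub_nonneg.2 h) (sub_nonneg.2 h)) (by linarith : 0 ≤ ww)]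

lemma de_mul : de * (8 * ww + 7) = 4 * ww ^ 2 - 3 := by
  have := ww_lb
  unfold de; field_simp

lemma de_pos : 0 < de := by
  have := ww_lb
  unfold de
  apply div_pos <;> nlinarith

lemma de_ub : de < 0.0174 := by
  have h1 := ww_lb
  have h2 := ww_ub
  unfold de
  rw [div_lt_iff₀ (by linarith)]
  nlinarith

lemma de_eq : (2 * cos (2 * π / 7) - 1) / (8 * cos (π / 7) + 7) = de := by
  have : cos (2 * π / 7) = 2 * ww ^ 2 - 1 := by
    rw [ww, ← cos_two_mul]; congr 1; ring
  rw [this, de, ww]; congr 1; ring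

lemma cos_vals {n : ℕ} (hn : 2 ≤ n) : (n = 2 ∧ cos (π / n) = 0) ∨ (n = 3 ∧ cos (π / n) = 1 / 2) ∨
    (n = 4 ∧ cos (π / n) = √2 / 2) ∨ (n = 5 ∧ cos (π / n) = (1 + √5) / 4) ∨
    (n = 6 ∧ cos (π / n) = √3 / 2) ∨ (7 ≤ n ∧ ww ≤ cos (π / n)) := by
  rcases Nat.lt_or_ge n 7 with h | h
  · interval_cases n
    · left; simp
    · right; left; simp
    · right; right; left; simp
    · right; right; right; left; simp
    · right; right; right; right; left; simp
  · right; right; right; right; right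
    refine ⟨h, ?_⟩
    have hR : (7 : ℝ) ≤ n := by exact_mod_cast h
    apply cos_le_cos_of_nonneg_of_le_pi
    · positivity
    · linarith [pi_pos]
    · exact div_le_div_of_nonneg_left pi_pos.le (by norm_num) hR

lemma gam_bound {A B : SL2R} {d : ℝ} (hA : 0 < be A) (hB : 0 < be B) (dA : dd A < d)
    (dB : dd B < d) : gam A B < 4 * d * (be A + be B) ^ 2 := by
  have e : gam A B = 4 * (dd A * be B ^ 2 + dd B * be A ^ 2
      - 2 * (be A * be B) * (pp A * pp B + rr A * rr B) - (pp A * rr B - rr A * pp B) ^ 2) := by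
    simp only [gam, ip, dd]; ring
  have h1 : -(2 * (pp A * pp B + rr A * rr B)) ≤ dd A + dd B := by
    simp only [dd]; nlinarith [sq_nonneg (pp A + pp B), sq_nonneg (rr A + rr B)]
  have hAB := mul_pos hA hB
  have h2 := mul_le_mul_of_nonneg_left h1 hAB.le
  have h3 := mul_lt_mul_of_pos_right dA (pow_pos hB 2)
  have h4 := mul_lt_mul_of_pos_right dB (pow_pos hA 2)
  have h5 : be A * be B * (dd A + dd B) ≤ be A * be B * (2 * d) :=
    mul_le_mul_of_nonneg_left (by linarith) hAB.le
  rw [e]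
  nlinarith [sq_nonneg (pp A * rr B - rr A * pp B)]

lemma sharp {x1 x2 b1 b2 a1 a2 c g : ℝ} (hx1 : 0 ≤ x1) (hx2 : 0 ≤ x2) (d1 : x1 < de) (d2 : x2 < de)
    (h1 : b1 ^ 2 = 1 - a1 ^ 2 + x1)
    (h2 : b2 ^ 2 = 1 - a2 ^ 2 + x2) (hs : a1 ^ 2 + a2 ^ 2 = 1 / 4) (hp : a1 * a2 = 0)
    (hc : ww ≤ c) (hg : g / 4 = a1 ^ 2 + a2 ^ 2 + c ^ 2 + 2 * c * (a1 * a2) - 1)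
    (hb : g < 4 * de * (b1 + b2) ^ 2) : False := by
  have hd := de_pos
  have hdu := de_ub
  have hm := de_mul
  have hw := ww_lb
  have hprod : (b1 * b2) ^ 2 < (ww - de) ^ 2 := by
    have e : (b1 * b2) ^ 2 = (1 - a1 ^ 2 + x1) * (1 - a2 ^ 2 + x2) := by rw [mul_pow, h1, h2]
    have e0 : a1 ^ 2 * a2 ^ 2 = 0 := by rw [← mul_pow, hp]; ring
    have t1 : x1 * (1 - a2 ^ 2) ≤ de * (1 - a2 ^ 2) :=
      mul_le_mul_of_nonneg_right d1.le (by linarith [sq_nonneg a1])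
    have t2 : x2 * (1 - a1 ^ 2) < de * (1 - a1 ^ 2) :=
      mul_lt_mul_of_pos_right d2 (by linarith [sq_nonneg a2])
    have t3 : x1 * x2 ≤ de * de := mul_le_mul d1.le d2.le hx2 hd.le
    have t4 : de * (a1 ^ 2 + a2 ^ 2) = de * (1 / 4) := by rw [hs]
    rw [e]
    linarith
  have hprod' : b1 * b2 < ww - de := lt_of_pow_lt_pow_left₀ 2 (by linarith) hprod
  have hsum : (b1 + b2) ^ 2 < 7 / 4 + 2 * ww := by
    have : (b1 + b2) ^ 2 = b1 ^ 2 + b2 ^ 2 + 2 * (b1 * b2) := by ring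
    rw [this, h1, h2]; linarith
  have := mul_lt_mul_of_pos_left hsum hd
  rw [hp, hs] at hg
  have hc2 : ww ^ 2 ≤ c ^ 2 := pow_le_pow_left₀ (by linarith) hc 2
  linarith

set_option maxHeartbeats 4000000 in
lemma finite_check {a1 a2 c : ℝ} (h1 : a1 = 0 ∨ a1 = 1 / 2 ∨ a1 = √2 / 2 ∨ a1 = (1 + √5) / 4 ∨ a1 = √3 / 2)
    (h2 : a2 = 0 ∨ a2 = 1 / 2 ∨ a2 = √2 / 2 ∨ a2 = (1 + √5) / 4 ∨ a2 = √3 / 2)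
    (hc : c = 0 ∨ c = 1 / 2 ∨ c = √2 / 2 ∨ c = (1 + √5) / 4 ∨ c = √3 / 2 ∨ c = (√5 - 1) / 4 ∨
      c = -((√5 - 1) / 4) ∨ 0.9 ≤ c)
    (hord : a1 ≤ a2) (hn0 : a2 ≠ 0) (hpos : 0 < c + a1 * a2)
    (hg0 : 0 < a1 ^ 2 + a2 ^ 2 + c ^ 2 + 2 * c * (a1 * a2) - 1)
    (hg1 : a1 ^ 2 + a2 ^ 2 + c ^ 2 + 2 * c * (a1 * a2) - 1 ≤ 0.0348 * (2.0348 - a1 ^ 2 - a2 ^ 2)) :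
    a1 = 0 ∧ a2 = 1 / 2 ∧ 0.9 ≤ c := by
  have q2 : √2 ^ 2 = 2 := sq_sqrt (by norm_num)
  have q3 : √3 ^ 2 = 3 := sq_sqrt (by norm_num)
  have q5 : √5 ^ 2 = 5 := sq_sqrt (by norm_num)
  have l2 : 1.4142 ≤ √2 := by apply le_sqrt_of_sq_le; norm_num
  have l3 : 1.7320 ≤ √3 := by apply le_sqrt_of_sq_le; norm_num
  have l5 : 2.2360 ≤ √5 := by apply le_sqrt_of_sq_le; norm_num
  have u2 : √2 ≤ 1.4143 := by rw [sqrt_le_left (by norm_num)]; norm_num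
  have u3 : √3 ≤ 1.7321 := by rw [sqrt_le_left (by norm_num)]; norm_num
  have u5 : √5 ≤ 2.2361 := by rw [sqrt_le_left (by norm_num)]; norm_num
  generalize √2 = s2 at *
  generalize √3 = s3 at *
  generalize √5 = s5 at *
  have hcb : 0.9 ≤ c → a1 ^ 2 + a2 ^ 2 + 0.81 + 1.8 * (a1 * a2) - 1 ≤ a1 ^ 2 + a2 ^ 2 + c ^ 2 + 2 * c * (a1 * a2) - 1 := by
    intro h
    have : 0 ≤ a1 := by rcases h1 with h | h | h | h | h <;> rw [h] <;> linarith
    have : 0 ≤ a1 * a2 := mul_nonneg this (by linarith)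
    nlinarith
  rcases hc with hc | hc | hc | hc | hc | hc | hc | hc
  case inr.inr.inr.inr.inr.inr.inr =>
    have h3 := (hcb hc).trans hg1
    clear hcb hg1 hg0 hpos
    rcases h1 with h1 | h1 | h1 | h1 | h1 <;> rcases h2 with h2 | h2 | h2 | h2 | h2 <;>
    first
    | exact ⟨h1, h2, hc⟩
    | exact absurd h2 hn0
    | (exfalso; subst h1 h2; nlinarith)
  all_goals
    exfalso
    clear hcb
    rcases h1 with h1 | h1 | h1 | h1 | h1 <;> rcases h2 with h2 | h2 | h2 | h2 | h2 <;>
    first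
    | exact absurd h2 hn0
    | (subst h1 h2 hc; linarith)
    | (subst h1 h2 hc; nlinarith)


lemma dd_nonneg (x : SL2R) : 0 ≤ dd x := by simp only [dd]; positivity

lemma be_sq (x : SL2R) : be x ^ 2 = 1 - al x ^ 2 + dd x := by
  have := det_eq x
  simp only [dd]; linarith

lemma cos_pi_div_nonneg {n : ℕ} (hn : 2 ≤ n) : 0 ≤ cos (π / n) := by
  have hR : (2 : ℝ) ≤ n := by exact_mod_cast hn
  apply cos_nonneg_of_neg_pi_div_two_le_of_le
  · have : 0 ≤ π / n := by positivity
    linarith [pi_pos]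
  · exact div_le_div_of_nonneg_left pi_pos.le (by norm_num) hR

lemma cos_pi_div_sq {n : ℕ} (hn : 2 ≤ n) : cos (π / n) ^ 2 < 1 := by
  have := sin_pi_div_pos hn
  have := sin_sq_add_cos_sq (π / n)
  nlinarith

lemma jorg_small {G : Subgroup SL2R} (hG : Fin' G) {A B : SL2R} (hA : A ∈ G) (hB : B ∈ G)
    {n : ℕ} (hn : 2 ≤ n) (aA : al A = cos (π / n)) (hg : 0 < gam A B)
    (hgb : gam A B < 4 * de * (be A + be B) ^ 2) (dA : dd A < de) (dB : dd B < de) : n < 7 := by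
  by_contra h7
  have hc := cos_vals hn
  have hw : ww ≤ cos (π / n) := by
    rcases hc with h | h | h | h | h | h
    · omega
    · omega
    · omega
    · omega
    · omega
    · exact h.2
  have h1 := ww_lb
  have h2 := de_ub
  have h0 := de_pos
  have hsq : al A ^ 2 < 1 := by rw [aA]; exact cos_pi_div_sq hn
  have hal := al_sq A
  have hj := jorg hG hA hB (by linarith) hg
  have hA2 : 0.81 ≤ al A ^ 2 := by rw [aA]; nlinarith
  have b1 := be_sq A
  have b2 := be_sq B
  have hB2 := sq_nonneg (al B)
  have hs : (be A + be B) ^ 2 ≤ 2 * (be A ^ 2 + be B ^ 2) := by nlinarith [sq_nonneg (be A - be B)]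
  have hs2 : (be A + be B) ^ 2 ≤ 2 * 1.2248 := by linarith
  have : 4 * de * (be A + be B) ^ 2 ≤ 4 * 0.0174 * (2 * 1.2248) := by
    apply mul_le_mul _ hs2 (sq_nonneg _) (by norm_num)
    linarith
  linarith

lemma cos_list {n : ℕ} (hn : 2 ≤ n) (h7 : n < 7) : cos (π / n) = 0 ∨ cos (π / n) = 1 / 2 ∨
    cos (π / n) = √2 / 2 ∨ cos (π / n) = (1 + √5) / 4 ∨ cos (π / n) = √3 / 2 := by
  rcases cos_vals hn with h | h | h | h | h | h
  · exact Or.inl h.2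
  · exact Or.inr (Or.inl h.2)
  · exact Or.inr (Or.inr (Or.inl h.2))
  · exact Or.inr (Or.inr (Or.inr (Or.inl h.2)))
  · exact Or.inr (Or.inr (Or.inr (Or.inr h.2)))
  · omega

lemma cos_sq_list {n : ℕ} (hn : 2 ≤ n) (h7 : n < 7) : cos (π / n) ^ 2 ≤ 3 / 4 := by
  have hn6 : cos (π / n) ≤ cos (π / 6) := by
    have hR : (2 : ℝ) ≤ n := by exact_mod_cast hn
    have hR6 : (n : ℝ) ≤ 6 := by exact_mod_cast Nat.lt_succ_iff.1 h7
    apply cos_le_cos_of_nonneg_of_le_pi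
    · positivity
    · rw [div_le_iff₀ (by linarith)]; nlinarith [pi_pos]
    · exact div_le_div_of_nonneg_left pi_pos.le (by linarith) hR6
  rw [cos_pi_div_six] at hn6
  have := cos_pi_div_nonneg hn
  have q3 : √3 ^ 2 = 3 := sq_sqrt (by norm_num)
  nlinarith

lemma cos_ge_half {n : ℕ} (hn : 3 ≤ n) : 1 / 2 ≤ cos (π / n) := by
  rw [← cos_pi_div_three]
  have hR : (3 : ℝ) ≤ n := by exact_mod_cast hn
  apply cos_le_cos_of_nonneg_of_le_pi
  · positivity
  · linarith [pi_pos]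
  · exact div_le_div_of_nonneg_left pi_pos.le (by norm_num) hR

lemma cos_two_pi_div_five : cos (2 * (π / 5)) = (√5 - 1) / 4 := by
  rw [cos_two_mul, cos_pi_div_five]
  have q5 : √5 ^ 2 = 5 := sq_sqrt (by norm_num)
  linear_combination (1 / 8) * q5

set_option maxHeartbeats 2000000 in
lemma core2 {G : Subgroup SL2R} (hm1 : -1 ∈ G) (hG : Fin' G) {A B : SL2R} (hA : A ∈ G) (hB : B ∈ G)
    {n m : ℕ} (hn : 2 ≤ n) (hm : 2 ≤ m) (aA : al A = cos (π / n)) (aB : al B = cos (π / m))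
    (bA : 0 < be A) (bB : 0 < be B) (dA : dd A < de) (dB : dd B < de) (hg : 0 < gam A B)
    (hord : al A ≤ al B) (hnz : al B ≠ 0) : False := by
  have h0 := de_pos
  have h2 := de_ub
  have hgb := gam_bound bA bB dA dB
  have n7 := jorg_small hG hA hB hn aA hg hgb dA dB
  have m7 := jorg_small hG hB hA hm aB (by rw [gam_comm]; exact hg)
    (by rw [gam_comm, add_comm]; exact hgb) dB dA
  have a1 := cos_pi_div_nonneg hn
  have a2 := cos_pi_div_nonneg hm
  have s1 := cos_sq_list hn n7
  have s2 := cos_sq_list hm m7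
  have L1 := cos_list hn n7
  have L2 := cos_list hm m7
  rw [← aA] at a1 s1 L1
  rw [← aB] at a2 s2 L2
  have e1 := al_sq A
  have e2 := al_sq B
  have b1 := be_sq A
  have b2 := be_sq B
  have x1 := dd_nonneg A
  have x2 := dd_nonneg B
  have hs : (be A + be B) ^ 2 ≤ 2 * (be A ^ 2 + be B ^ 2) := by nlinarith [sq_nonneg (be A - be B)]
  have hip : ip A B < 0 := by
    have t1 : (pp A * pp B + rr A * rr B) ^ 2 ≤ dd A * dd B := by
      simp only [dd]; nlinarith [sq_nonneg (pp A * rr B - rr A * pp B)]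
    have t2 : dd A * dd B < be A ^ 2 * be B ^ 2 := by
      apply mul_lt_mul'' <;> linarith
    have t3 : (pp A * pp B + rr A * rr B) ^ 2 < (be A * be B) ^ 2 := by
      rw [mul_pow]; linarith
    have t4 := lt_of_pow_lt_pow_left₀ 2 (mul_pos bA bB).le t3
    simp only [ip]; linarith
  obtain ⟨c, hc⟩ : ∃ c, c = -(al A * al B + ip A B) := ⟨_, rfl⟩
  have hpos : 0 < c + al A * al B := by rw [hc]; linarith
  have hgc : gam A B / 4 = al A ^ 2 + al B ^ 2 + c ^ 2 + 2 * c * (al A * al B) - 1 := by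
    have : ip A B = -(c + al A * al B) := by rw [hc]; ring
    have i1 : ip A A = al A ^ 2 - 1 := by linarith
    have i2 : ip B B = al B ^ 2 - 1 := by linarith
    rw [gam, this, i1, i2]; ring
  have hgu : gam A B / 4 ≤ 0.0348 * (2.0348 - al A ^ 2 - al B ^ 2) := by
    have u1 : be A ^ 2 + be B ^ 2 ≤ 2.0348 - al A ^ 2 - al B ^ 2 := by linarith
    have : de * (be A + be B) ^ 2 ≤ 0.0174 * (2 * (2.0348 - al A ^ 2 - al B ^ 2)) := by
      apply mul_le_mul h2.le _ (sq_nonneg _) (by norm_num)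
      linarith
    linarith
  have hchalf : -1 / 2 < c := by
    by_contra hh; push Not at hh
    have k1 : (c + al A * al B) ^ 2 ≤ (al A * al B - 1 / 2) ^ 2 :=
      pow_le_pow_left₀ hpos.le (by linarith) 2
    have k2 : al A * al A ≤ al A * al B := mul_le_mul_of_nonneg_left hord a1
    nlinarith
  have hgup : gam A B ≤ 0.2833 := by
    have := sq_nonneg (al A)
    have := sq_nonneg (al B)
    linarith
  have hclist : c = 0 ∨ c = 1 / 2 ∨ c = √2 / 2 ∨ c = (1 + √5) / 4 ∨ c = √3 / 2 ∨
      c = (√5 - 1) / 4 ∨ c = -((√5 - 1) / 4) ∨ ww ≤ c := by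
    rcases le_or_gt 1 c with hc1 | hc1
    · have := ww_ub
      iterate 7 right
      linarith
    set E := -(A * B) with hE
    have hEG : E ∈ G := by
      rw [hE, ← neg_one_mul]; exact G.mul_mem hm1 (G.mul_mem hA hB)
    have alE : al E = c := by rw [hE, al_neg, al_mul', hc]
    have hEe : ip E E < 0 := by
      have := al_sq E
      rw [alE] at this
      have hc2 : c ^ 2 < 1 := by
        rw [sq_lt_one_iff_abs_lt_one]; exact abs_lt.2 ⟨by linarith, hc1⟩
      linarith
    have gE : gam E A = gam A B := by
      rw [hE, gam_Sc (Sc_neg (A * B)), gam_comm, gam_mul]; ring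
    obtain ⟨q, p, hq, hp, hpq, hcop, alq, E', hE', ka, ka0, kas, alE', hSc⟩ := prim hm1 hG hEG hEe
    rw [alE] at alq
    have gE' : gam E' A = ka ^ 2 * gam A B := by rw [gam_Sc hSc, gE]
    have hsq := cos_pi_div_sq hq
    have eE' := al_sq E'
    rw [alE'] at eE'
    have hj := jorg hG hE' hA (by linarith) (by rw [gE']; positivity)
    rw [gE'] at hj
    have hv := cos_vals hq
    rcases Nat.lt_or_ge p 2 with hp1 | hp2
    · have : p = 1 := by omega
      subst this
      rw [Nat.cast_one, one_mul] at alq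
      rw [← alq] at hv
      rcases hv with h | h | h | h | h | h
      · exact Or.inl h.2
      · exact Or.inr (Or.inl h.2)
      · exact Or.inr (Or.inr (Or.inl h.2))
      · exact Or.inr (Or.inr (Or.inr (Or.inl h.2)))
      · exact Or.inr (Or.inr (Or.inr (Or.inr (Or.inl h.2))))
      · iterate 7 right
        exact h.2
    · have hqR : (0 : ℝ) < q := by
        have : 0 < q := by omega
        exact_mod_cast this
      rcases Nat.lt_or_ge q (p + 2) with hq1 | hq2
      · exfalso
        have hqp : q = p + 1 := by omega
        have h3 := cos_ge_half (n := q) (by omega)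
        have : (p : ℝ) * (π / q) = π - π / q := by
          have : (q : ℝ) = p + 1 := by rw [hqp]; push_cast; ring
          field_simp
          linarith
        rw [this, cos_pi_sub] at alq
        linarith
      · have hk := ka_cos_le hq hp2 hq2 kas ka0
        have hk1 := ka_le_one hq hp hpq kas ka0
        rcases Nat.lt_or_ge q 7 with h7 | h7
        · have hq5 : q = 5 := by
            interval_cases q
            · omega
            · omega
            · have : p = 2 := by omega
              subst this; revert hcop; decide
            · rfl
            · interval_cases p <;> first | omega | (revert hcop; decide)
          subst hq5
          have : p = 2 ∨ p = 3 := by omega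
          rcases this with rfl | rfl
          · right; right; right; right; right; left
            rw [alq, ← cos_two_pi_div_five]; norm_num
          · right; right; right; right; right; right; left
            rw [alq, ← cos_two_pi_div_five, ← cos_pi_sub]
            congr 1; push_cast; ring
        · exfalso
          have hw : ww ≤ cos (π / q) := by
            rcases hv with h | h | h | h | h | h
            · omega
            · omega
            · omega
            · omega
            · omega
            · exact h.2
          have hwl := ww_lb
          have k1 : ka * 1.8 ≤ 1 := (mul_le_mul_of_nonneg_left (by linarith) ka0.le).trans hk
          have k2 : ka ≤ 1 / 1.8 := by linarith
          have k3 : ka ^ 2 ≤ (1 / 1.8) ^ 2 := pow_le_pow_left₀ ka0.le k2 2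
          have k4 : ka ^ 2 * gam A B ≤ (1 / 1.8) ^ 2 * 0.2833 :=
            mul_le_mul k3 hgup hg.le (by norm_num)
          have k5 : 0.81 ≤ cos (π / q) ^ 2 := by
            have : (0.9 : ℝ) ^ 2 ≤ cos (π / q) ^ 2 := pow_le_pow_left₀ (by norm_num) (by linarith) 2
            norm_num at this ⊢
            linarith
          norm_num at k4
          linarith
  have hwl := ww_lb
  have hfc := finite_check L1 L2 (c := c) (by
    rcases hclist with h | h | h | h | h | h | h | h
    · exact Or.inl h
    · exact Or.inr (Or.inl h)
    · exact Or.inr (Or.inr (Or.inl h))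
    · exact Or.inr (Or.inr (Or.inr (Or.inl h)))
    · exact Or.inr (Or.inr (Or.inr (Or.inr (Or.inl h))))
    · exact Or.inr (Or.inr (Or.inr (Or.inr (Or.inr (Or.inl h)))))
    · exact Or.inr (Or.inr (Or.inr (Or.inr (Or.inr (Or.inr (Or.inl h))))))
    · iterate 7 right
      linarith) hord hnz hpos (by rw [← hgc]; linarith) (by rw [← hgc]; exact hgu)
  obtain ⟨z1, z2, z3⟩ := hfc
  have hcw : ww ≤ c := by
    have u2 : √2 ≤ 1.4143 := by rw [sqrt_le_left (by norm_num)]; norm_num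
    have u3 : √3 ≤ 1.7321 := by rw [sqrt_le_left (by norm_num)]; norm_num
    have u5 : √5 ≤ 2.2361 := by rw [sqrt_le_left (by norm_num)]; norm_num
    have l5 : 0 ≤ √5 := sqrt_nonneg _
    rcases hclist with h | h | h | h | h | h | h | h
    · linarith
    · linarith
    · linarith
    · linarith
    · linarith
    · linarith
    · linarith
    · exact h
  exact sharp x1 x2 dA dB b1 b2 (by rw [z1, z2]; norm_num) (by rw [z1, z2]; norm_num) hcw hgc hgb


lemma Par_central {T : SL2R} (h : nu T = 0) (g : SL2R) : Par T g := by
  obtain ⟨c1, c2, c3⟩ := (nu_zero_iff T).1 h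
  have hd := det_eq T
  rw [c1, c2, c3] at hd
  refine ⟨1, ?_, ?_, ?_⟩ <;>
    simp only [al_mul, be_mul, pp_mul, rr_mul, al_inv, be_inv, pp_inv, rr_inv, c1, c2, c3]
  · linear_combination be g * hd
  · linear_combination pp g * hd
  · linear_combination rr g * hd

lemma Par_comm {T g : SL2R} (h : T * g = g * T) : Par T g := by
  have : T * g * T⁻¹ = g := by rw [h, mul_inv_cancel_right]
  exact ⟨1, by rw [this]; exact ⟨by ring, by ring, by ring⟩⟩

lemma central_comm {T : SL2R} (h : nu T = 0) (g : SL2R) : T * g = g * T := by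
  obtain ⟨c1, c2, c3⟩ := (nu_zero_iff T).1 h
  apply ext_coord <;> simp only [al_mul, be_mul, pp_mul, rr_mul, c1, c2, c3] <;> ring

def uu : SL2R := ⟨!![1, 1; 0, 1], by simp⟩

lemma nu_uu : nu uu ≠ 0 := by
  simp [nu, uu, be, pp, rr]

lemma ip_neg_of {G : Subgroup SL2R} (hG : Fin' G) {A B : SL2R} (hA : A ∈ G) (hB : B ∈ G)
    (hF : ∀ g, nu g ≠ 0 → Par A g → Par B g → False) (dA : dd A < de) (dB : dd B < de) :
    ip A A < 0 := by
  by_contra h; push Not at h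
  have hu := de_ub
  have hnu : nu A ≤ 0.035 := by
    simp only [ip] at h
    simp only [dd] at dA
    simp only [nu]; linarith
  have hz := zass hG hA hB hF (by linarith) (by linarith) hA hnu
  by_cases hB0 : nu B = 0
  · exact hF uu nu_uu (Par_central hz _) (Par_central hB0 _)
  · exact hF B hB0 (Par_central hz _) (Par_comm rfl)

/-- oriented primitive elliptic elements -/
lemma prim' {G : Subgroup SL2R} (hm1 : -1 ∈ G) (hG : Fin' G) {A : SL2R} (hA : A ∈ G)
    (he : ip A A < 0) : ∃ n : ℕ, 2 ≤ n ∧ ∃ A' ∈ G, ∃ ka : ℝ, ka ≠ 0 ∧ ka ^ 2 ≤ 1 ∧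
      al A' = cos (π / n) ∧ Sc ka A' A ∧ 0 < be A' ∧ (al A' = 0 → al A = 0) := by
  obtain ⟨n, p, hn, hp, hpn, -, alA, A', hA', ka, ka0, kas, alA', hSc⟩ := prim hm1 hG hA he
  have hk1 := ka_le_one hn hp hpn kas ka0
  have hz : al A' = 0 → al A = 0 := by
    intro h
    have hn2 : n = 2 := by
      by_contra hne
      have := cos_ge_half (n := n) (by omega)
      linarith
    subst hn2
    have : p = 1 := by omega
    subst this
    rw [alA, Nat.cast_one, one_mul, ← alA', h]
  have hb : be A' ≠ 0 := by
    intro h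
    have hi : ip A' A' = ka ^ 2 * ip A A := by rw [ip_Sc hSc, ip_comm, ip_Sc hSc]; ring
    have h1 : ip A' A' < 0 := by
      rw [hi]; exact mul_neg_of_pos_of_neg (by positivity) he
    simp only [ip, h] at h1
    nlinarith [sq_nonneg (pp A'), sq_nonneg (rr A')]
  rcases lt_or_gt_of_ne hb with hlt | hgt
  · refine ⟨n, hn, A'⁻¹, G.inv_mem hA', -1 * ka, by simpa using ka0.ne', by nlinarith,
      by rw [al_inv, alA'], Sc_trans (Sc_inv A') hSc, by rw [be_inv]; linarith, ?_⟩
    rw [al_inv]; exact hz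
  · exact ⟨n, hn, A', hA', ka, ka0.ne', by nlinarith, alA', hSc, hgt, hz⟩

lemma core {G : Subgroup SL2R} (hm1 : -1 ∈ G) (hG : Fin' G) {A B : SL2R} (hA : A ∈ G) (hB : B ∈ G)
    (hF : ∀ g, nu g ≠ 0 → Par A g → Par B g → False) (dA : dd A < de) (dB : dd B < de) :
    False := by
  have eA := ip_neg_of hG hA hB hF dA dB
  have eB := ip_neg_of hG hB hA (fun g h1 h2 h3 => hF g h1 h3 h2) dB dA
  have nuA : nu A ≠ 0 := by
    intro h
    obtain ⟨c1, c2, c3⟩ := (nu_zero_iff A).1 h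
    simp [ip, c1, c2, c3] at eA
  have hnc : A * B ≠ B * A := fun h => hF A nuA (Par_comm rfl) (Par_comm h.symm)
  have hg := gam_pos eA hnc
  have hz : ¬ (al A = 0 ∧ al B = 0) := by
    rintro ⟨zA, zB⟩
    by_cases h0 : nu (A * B) = 0
    · apply hnc
      have := central_comm h0 A
      rw [mul_assoc] at this
      exact (mul_left_cancel this).symm
    · have hsq : ∀ T : SL2R, al T = 0 → T⁻¹ = -T := by
        intro T hT
        apply ext_coord
        · rw [al_inv, al_neg, hT]; simp
        · rw [be_inv, be_neg]
        · rw [pp_inv, pp_neg]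
        · rw [rr_inv, rr_neg]
      have iA := hsq A zA
      have iB := hsq B zB
      have k1 : (A * B)⁻¹ = B * A := by rw [_root_.mul_inv_rev, iA, iB, neg_mul_neg]
      apply hF (A * B) h0
      · refine ⟨-1, ?_⟩
        have : A * (A * B) * A⁻¹ = (A * B)⁻¹ := by
          rw [k1, ← mul_assoc]
          have : A * A = -1 := by
            have h := mul_inv_cancel A
            rw [iA, mul_neg] at h
            rw [← h, neg_neg]
          rw [this, iA]; simp
        rw [this]; exact Sc_inv _
      · refine ⟨-1, ?_⟩
        have : B * (A * B) * B⁻¹ = (A * B)⁻¹ := by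
          rw [k1]; group
        rw [this]; exact Sc_inv _
  obtain ⟨n, hn, A', hA', ka, ka0, ka1, aA, scA, bA, zA⟩ := prim' hm1 hG hA eA
  obtain ⟨m, hm, B', hB', kb, kb0, kb1, aB, scB, bB, zB⟩ := prim' hm1 hG hB eB
  have dA' : dd A' < de := by
    rw [dd_Sc scA]
    have := mul_le_mul_of_nonneg_right ka1 (dd_nonneg A)
    linarith
  have dB' : dd B' < de := by
    rw [dd_Sc scB]
    have := mul_le_mul_of_nonneg_right kb1 (dd_nonneg B)
    linarith
  have hg' : 0 < gam A' B' := by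
    rw [gam_Sc scA, gam_comm, gam_Sc scB, gam_comm]
    positivity
  have pA := cos_pi_div_nonneg hn
  have pB := cos_pi_div_nonneg hm
  rcases le_total (al A') (al B') with h | h
  · refine core2 hm1 hG hA' hB' hn hm aA aB bA bB dA' dB' hg' h ?_
    intro h0
    exact hz ⟨zA (by linarith), zB h0⟩
  · refine core2 hm1 hG hB' hA' hm hn aB aA bB bA dB' dA' (by rw [gam_comm]; exact hg') h ?_
    intro h0
    exact hz ⟨zA h0, zB (by linarith)⟩


lemma Par_mul {S T g : SL2R} (hS : Par S g) (hT : Par T g) : Par (S * T) g := by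
  obtain ⟨la, h1⟩ := hS
  obtain ⟨mu, h2⟩ := hT
  refine ⟨mu * la, ?_⟩
  have e : S * T * g * (S * T)⁻¹ = S * (T * g * T⁻¹) * S⁻¹ := by group
  rw [e]
  exact Sc_trans (Sc_conj S h2) h1

lemma Par_la {T g : SL2R} {la : ℝ} (hg : nu g ≠ 0) (h : Sc la (T * g * T⁻¹) g) : la ≠ 0 := by
  rintro rfl
  apply hg
  have h1 := Sc_conj T⁻¹ h
  have e : T⁻¹ * (T * g * T⁻¹) * T⁻¹⁻¹ = g := by group
  rw [e] at h1
  obtain ⟨k1, k2, k3⟩ := h1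
  rw [nu_zero_iff, k1, k2, k3]; simp

lemma Par_inv {T g : SL2R} (hg : nu g ≠ 0) (hT : Par T g) : Par T⁻¹ g := by
  obtain ⟨la, h⟩ := hT
  have h0 := Par_la hg h
  have h1 := Sc_conj T⁻¹ h
  have e : T⁻¹ * (T * g * T⁻¹) * T⁻¹⁻¹ = g := by group
  rw [e] at h1
  obtain ⟨k1, k2, k3⟩ := h1
  refine ⟨la⁻¹, ?_, ?_, ?_⟩
  · rw [k1]; field_simp
  · rw [k2]; field_simp
  · rw [k3]; field_simp

lemma Par_closure {A B g : SL2R} (hg : nu g ≠ 0) (hA : Par A g) (hB : Par B g) {S : SL2R}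
    (hS : S ∈ Subgroup.closure {A, B}) : Par S g := by
  induction hS using Subgroup.closure_induction with
  | mem x hx =>
    rcases hx with rfl | rfl
    · exact hA
    · exact hB
  | one => exact Par_comm (by rw [one_mul, mul_one])
  | mul x y _ _ hx hy => exact Par_mul hx hy
  | inv x _ hx => exact Par_inv hg hx

lemma sq_of_al_zero {T : SL2R} (hT : al T = 0) : T ^ 2 = -1 := by
  have hd := det_eq T
  rw [hT] at hd
  apply ext_coord
  · rw [sq, al_mul, al_neg, al_one, hT]; linarith
  · rw [sq, be_mul, be_neg, be_one, hT]; ring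
  · rw [sq, pp_mul, pp_neg, pp_one, hT]; ring
  · rw [sq, rr_mul, rr_neg, rr_one, hT]; ring

/-- matrix relations coming from `S g S⁻¹ = al g + la X` -/
lemma Sc_rel {S g : SL2R} {la : ℝ} (h : Sc la (S * g * S⁻¹) g) :
    S 0 0 * pp g + S 0 1 * (rr g - be g) = la * (pp g * S 0 0 + (be g + rr g) * S 1 0) ∧
    S 0 0 * (be g + rr g) - S 0 1 * pp g = la * (pp g * S 0 1 + (be g + rr g) * S 1 1) ∧
    S 1 0 * pp g + S 1 1 * (rr g - be g) = la * ((rr g - be g) * S 0 0 - pp g * S 1 0) ∧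
    S 1 0 * (be g + rr g) - S 1 1 * pp g = la * ((rr g - be g) * S 0 1 - pp g * S 1 1) := by
  obtain ⟨h1, h2, h3⟩ := h
  have ha := al_conj S g
  set k := S * g * S⁻¹ with hk
  have e : S * g = k * S := by rw [hk]; group
  have e1 := congrArg al e
  have e2 := congrArg be e
  have e3 := congrArg pp e
  have e4 := congrArg rr e
  rw [al_mul, al_mul, ha, h1, h2, h3] at e1
  rw [be_mul, be_mul, ha, h1, h2, h3] at e2
  rw [pp_mul, pp_mul, ha, h1, h2, h3] at e3
  rw [rr_mul, rr_mul, ha, h1, h2, h3] at e4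
  have s1 : S 0 0 = al S + pp S := by simp only [al, pp]; ring
  have s2 : S 0 1 = be S + rr S := by simp only [be, rr]; ring
  have s3 : S 1 0 = rr S - be S := by simp only [be, rr]; ring
  have s4 : S 1 1 = al S - pp S := by simp only [al, pp]; ring
  rw [s1, s2, s3, s4]
  refine ⟨?_, ?_, ?_, ?_⟩
  · linear_combination e1 + e3
  · linear_combination e2 + e4
  · linear_combination e4 - e2
  · linear_combination e1 - e3

lemma Par_la_cases {S g : SL2R} {la : ℝ} (hg : nu g ≠ 0) (h : Sc la (S * g * S⁻¹) g)
    (hS : S ^ 2 ≠ -1) : ip g g = 0 ∨ la = 1 := by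
  by_cases h0 : ip g g = 0
  · exact Or.inl h0
  right
  have h1 := ip_conj S g
  rw [ip_Sc h, ip_comm, ip_Sc h] at h1
  have h2 : (la - 1) * (la + 1) = 0 := by
    apply mul_right_cancel₀ h0
    linear_combination h1
  rcases mul_eq_zero.1 h2 with h3 | h3
  · linarith
  · exfalso
    have hl : la = -1 := by linarith
    obtain ⟨r1, r2, r3, r4⟩ := Sc_rel h
    rw [hl] at r1 r2 r3 r4
    apply hg
    have ha : al S ≠ 0 := fun hz => hS (sq_of_al_zero hz)
    rw [nu_zero_iff]
    have ea : S 0 0 + S 1 1 = 2 * al S := by simp only [al]; ring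
    have t1 : al S * pp g = 0 := by linear_combination (1 / 4) * (r1 - r4) - (1 / 2) * pp g * ea
    have t2 : al S * (be g + rr g) = 0 := by
      linear_combination (1 / 2) * r2 - (1 / 2) * (be g + rr g) * ea
    have t3 : al S * (rr g - be g) = 0 := by
      linear_combination (1 / 2) * r3 - (1 / 2) * (rr g - be g) * ea
    have t1' := (mul_eq_zero.1 t1).resolve_left ha
    have t2' := (mul_eq_zero.1 t2).resolve_left ha
    have t3' := (mul_eq_zero.1 t3).resolve_left ha
    exact ⟨by linarith, t1', by linarith⟩

lemma par_vec {r1 r2 v0 v1 y0 y1 : ℂ} (hr : r1 ≠ 0 ∨ r2 ≠ 0) (hv : r1 * v0 + r2 * v1 = 0)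
    (hy : r1 * y0 + r2 * y1 = 0) : v0 * y1 = v1 * y0 := by
  rcases hr with h | h
  · apply mul_left_cancel₀ h; linear_combination y1 * hv - v1 * hy
  · apply mul_left_cancel₀ h; linear_combination v0 * hy - y0 * hv

lemma scal_vec {v0 v1 y0 y1 : ℂ} (hv : v0 ≠ 0 ∨ v1 ≠ 0) (h : v0 * y1 = v1 * y0) :
    ∃ a : ℂ, y0 = a * v0 ∧ y1 = a * v1 := by
  rcases hv with h0 | h0
  · exact ⟨y0 / v0, by field_simp, by field_simp; linear_combination h⟩
  · exact ⟨y1 / v1, by field_simp; linear_combination -h, by field_simp⟩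

lemma eig {g : SL2R} (hg : nu g ≠ 0) : ∃ v : Fin 2 → ℂ, v ≠ 0 ∧ ∀ S : SL2R, Par S g → S ^ 2 ≠ -1 →
    ∃ a : ℂ, ((S : Matrix (Fin 2) (Fin 2) ℝ).map (Complex.ofReal ·)).mulVec v = a • v := by
  obtain ⟨mu, hmu⟩ := IsAlgClosed.exists_pow_nat_eq (ip g g : ℂ) (n := 2) (by norm_num)
  have hip : (ip g g : ℂ) = (pp g : ℂ) ^ 2 + (be g + rr g) * (rr g - be g) := by
    rw [ip]; push_cast; ring
  rw [hip] at hmu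
  set p : ℂ := (pp g : ℂ) with hp
  set u : ℂ := (be g : ℂ) + rr g with hu
  set l : ℂ := (rr g : ℂ) - be g with hl
  -- the matrix `X - mu` is nonzero
  have hnz : ¬ (p - mu = 0 ∧ u = 0 ∧ l = 0 ∧ p + mu = 0) := by
    rintro ⟨h1, h2, h3, h4⟩
    apply hg
    rw [nu_zero_iff]
    have a1 : (pp g : ℂ) = 0 := by rw [← hp]; linear_combination (h1 + h4) / 2
    have a2 : (be g : ℂ) = 0 := by simp only [hu, hl] at h2 h3; linear_combination (h2 - h3) / 2
    have a3 : (rr g : ℂ) = 0 := by simp only [hu, hl] at h2 h3; linear_combination (h2 + h3) / 2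
    exact ⟨by exact_mod_cast a2, by exact_mod_cast a1, by exact_mod_cast a3⟩
  obtain ⟨v0, v1, hv, e1, e2⟩ : ∃ v0 v1 : ℂ, (v0 ≠ 0 ∨ v1 ≠ 0) ∧ (p - mu) * v0 + u * v1 = 0 ∧
      l * v0 + (-(p + mu)) * v1 = 0 := by
    by_cases h : u ≠ 0 ∨ mu - p ≠ 0
    · exact ⟨u, mu - p, h, by ring, by linear_combination -hmu⟩
    · push Not at h
      refine ⟨mu + p, l, ?_, by linear_combination -hmu, by ring⟩
      by_contra hh
      push Not at hh
      exact hnz ⟨by linear_combination -h.2, h.1, hh.2, by linear_combination hh.1⟩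
  refine ⟨![v0, v1], ?_, ?_⟩
  · intro h
    have h0 := congrFun h 0
    have h1 := congrFun h 1
    simp at h0 h1
    tauto
  rintro S ⟨la, hS⟩ hS2
  have hla := Par_la hg hS
  have hlc := Par_la_cases hg hS hS2
  have hlaC : (la : ℂ) ≠ 0 := by exact_mod_cast hla
  have hlm : (la : ℂ) * mu = mu := by
    rcases hlc with h | h
    · have : mu ^ 2 = 0 := by rw [hmu, ← hip, h]; simp
      rw [pow_eq_zero_iff (by norm_num)] at this
      rw [this]; ring
    · rw [h]; simp
  obtain ⟨r1, r2, r3, r4⟩ := Sc_rel hS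
  have r1 := congrArg (fun x : ℝ => (x : ℂ)) r1
  have r2 := congrArg (fun x : ℝ => (x : ℂ)) r2
  have r3 := congrArg (fun x : ℝ => (x : ℂ)) r3
  have r4 := congrArg (fun x : ℝ => (x : ℂ)) r4
  push_cast at r1 r2 r3 r4
  rw [← hp, ← hu, ← hl] at r1 r4
  rw [← hp, ← hu] at r2
  rw [← hp, ← hl] at r3
  have f1 : (p - mu) * (S 0 0 * v0 + S 0 1 * v1) + u * (S 1 0 * v0 + S 1 1 * v1) = 0 := by
    apply mul_left_cancel₀ hlaC
    linear_combination (-v0) * r1 - v1 * r2 + S 0 0 * e1 + S 0 1 * e2 -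
      (S 0 0 * v0 + S 0 1 * v1) * hlm
  have f2 : l * (S 0 0 * v0 + S 0 1 * v1) + (-(p + mu)) * (S 1 0 * v0 + S 1 1 * v1) = 0 := by
    apply mul_left_cancel₀ hlaC
    linear_combination (-v0) * r3 - v1 * r4 + S 1 0 * e1 + S 1 1 * e2 -
      (S 1 0 * v0 + S 1 1 * v1) * hlm
  have hpar : v0 * (S 1 0 * v0 + S 1 1 * v1) = v1 * (S 0 0 * v0 + S 0 1 * v1) := by
    by_cases h : p - mu ≠ 0 ∨ u ≠ 0
    · exact par_vec h e1 f1
    · push Not at h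
      refine par_vec ?_ e2 f2
      by_contra hh
      push Not at hh
      exact hnz ⟨h.1, h.2, hh.1, by linear_combination -hh.2⟩
  obtain ⟨a, ha1, ha2⟩ := scal_vec hv hpar
  refine ⟨a, ?_⟩
  ext i
  fin_cases i
  · simp [Matrix.mulVec, dotProduct, Fin.sum_univ_two]; exact ha1
  · simp [Matrix.mulVec, dotProduct, Fin.sum_univ_two]; exact ha2

lemma no_common_s3 {A B : SL2R} (hne : IsNonelementaryR (Subgroup.closure {A, B})) (g : SL2R)
    (hg : nu g ≠ 0) (hA : Par A g) (hB : Par B g) : False := by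
  obtain ⟨S, hS, T, hT, hS1, hT1, hno⟩ := hne
  obtain ⟨v, hv, hev⟩ := eig hg
  exact hno ⟨v, hv, hev S (Par_closure hg hA hB hS) (hS1 2 (by norm_num)).2,
    hev T (Par_closure hg hA hB hT) (hT1 2 (by norm_num)).2⟩

lemma dist_dd (g : SL2R) : sinh (dist (g • UpperHalfPlane.I) UpperHalfPlane.I / 2) ^ 2 = dd g := by
  have hdet := det_eq g
  have hpos := (g • UpperHalfPlane.I).im_pos
  set w := g • UpperHalfPlane.I with hw
  have hw1 := UpperHalfPlane.coe_specialLinearGroup_apply g UpperHalfPlane.I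
  rw [← hw] at hw1
  simp only [Algebra.algebraMap_self, RingHom.id_apply, UpperHalfPlane.coe_I] at hw1
  have s1 : g 0 0 = al g + pp g := by simp only [al, pp]; ring
  have s2 : g 0 1 = be g + rr g := by simp only [be, rr]; ring
  have s3 : g 1 0 = rr g - be g := by simp only [be, rr]; ring
  have s4 : g 1 1 = al g - pp g := by simp only [al, pp]; ring
  have hden : ((g 1 0 : ℂ) * Complex.I + (g 1 1 : ℂ)) ≠ 0 := by
    intro h
    have h1 := congrArg Complex.re h
    have h2 := congrArg Complex.im h
    simp at h1 h2
    have := g.2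
    rw [Matrix.det_fin_two] at this
    simp [h1, h2] at this
  rw [eq_div_iff hden] at hw1
  have h1 := congrArg Complex.re hw1
  have h2 := congrArg Complex.im hw1
  simp at h1 h2
  rw [UpperHalfPlane.sinh_half_dist, div_pow, mul_pow, sq_sqrt (by simp; exact hpos.le),
    Complex.dist_eq, Complex.sq_norm, Complex.normSq_apply]
  simp
  rw [s3, s4, s2] at h1
  rw [s3, s4, s1] at h2
  generalize w.re = x at *
  generalize w.im = y at *
  rw [div_eq_iff (by positivity), dd]
  have hN : y * ((rr g - be g) ^ 2 + (al g - pp g) ^ 2) = 1 := by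
    linear_combination (al g - pp g) * h2 - (rr g - be g) * h1 + hdet
  have hN0 : (rr g - be g) ^ 2 + (al g - pp g) ^ 2 ≠ 0 := by
    intro h; rw [h] at hN; simp at hN
  have hQ : (x ^ 2 + y ^ 2) * ((rr g - be g) ^ 2 + (al g - pp g) ^ 2) =
      (al g + pp g) ^ 2 + (be g + rr g) ^ 2 := by
    rw [← h1, ← h2]; ring
  apply mul_right_cancel₀ hN0
  linear_combination hQ + (-2 - 4 * (pp g ^ 2 + rr g ^ 2)) * hN + 2 * hdet

lemma dd_lt_of_dist {g : SL2R}
    (h : dist (g • UpperHalfPlane.I) UpperHalfPlane.I < 2 * arsinh (√de)) : dd g < de := by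
  rw [← dist_dd]
  have h1 : dist (g • UpperHalfPlane.I) UpperHalfPlane.I / 2 < arsinh (√de) := by linarith
  have h2 := sinh_lt_sinh.2 h1
  rw [sinh_arsinh] at h2
  have h3 : 0 ≤ sinh (dist (g • UpperHalfPlane.I) UpperHalfPlane.I / 2) :=
    sinh_nonneg_iff.2 (by positivity)
  calc _ < √de ^ 2 := pow_lt_pow_left₀ h2 h3 (by norm_num)
    _ = de := sq_sqrt de_pos.le

lemma disc_fin {Γ : Subgroup SL2R} (hd : IsDiscreteSubgroupR Γ) (f : SL2R → SL2R)
    (hf : Continuous f) (hinj : Function.Injective f) (R : ℝ) :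
    {g : SL2R | f g ∈ Γ ∧ |al g| ≤ R ∧ |be g| ≤ R ∧ |pp g| ≤ R ∧ |rr g| ≤ R}.Finite := by
  haveI htg : IsTopologicalGroup SL2R := Matrix.SpecialLinearGroup.topologicalGroup
  have hce : Topology.IsClosedEmbedding
      (fun g : SL2R => (g : Matrix (Fin 2) (Fin 2) ℝ)) :=
    Matrix.SpecialLinearGroup.isClosedEmbedding_val
  haveI : T2Space SL2R := hce.toIsEmbedding.t2Space
  haveI : DiscreteTopology Γ := hd
  have hcl : IsClosed (Γ : Set SL2R) := Subgroup.isClosed_of_discrete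
  have hK0 : IsCompact {M : Matrix (Fin 2) (Fin 2) ℝ | ∀ i, M i ∈ {r : Fin 2 → ℝ | ∀ j, r j ∈ Set.Icc (-(2 * R)) (2 * R)}} :=
    isCompact_pi_infinite fun _ => isCompact_pi_infinite fun _ => isCompact_Icc
  have hK := hce.isCompact_preimage hK0
  have hKf := hK.image hf
  have hfin : ((Γ : Set SL2R) ∩ f '' _).Finite := (hKf.inter_left hcl).finite
    ((isDiscrete_iff_discreteTopology.mpr hd).mono Set.inter_subset_left)
  refine (hfin.preimage hinj.injOn).subset ?_
  rintro g ⟨h1, h2, h3, h4, h5⟩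
  refine ⟨h1, g, ?_, rfl⟩
  simp only [al, be, pp, rr, abs_le] at h2 h3 h4 h5
  intro i j
  fin_cases i <;> fin_cases j <;> simp <;> constructor <;> linarith

/-- the conjugated group together with `-1` -/
def GG (Γ : Subgroup SL2R) (h : SL2R) : Subgroup SL2R where
  carrier := {g | h * g * h⁻¹ ∈ Γ ∨ -(h * g * h⁻¹) ∈ Γ}
  one_mem' := by left; simpa using Γ.one_mem
  mul_mem' := by
    intro a b ha hb
    have e : h * (a * b) * h⁻¹ = (h * a * h⁻¹) * (h * b * h⁻¹) := by group
    simp only [Set.mem_setOf_eq] at *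
    rw [e]
    rcases ha with ha | ha <;> rcases hb with hb | hb
    · exact Or.inl (Γ.mul_mem ha hb)
    · right; rw [← mul_neg]; exact Γ.mul_mem ha hb
    · right; rw [← neg_mul]; exact Γ.mul_mem ha hb
    · left; rw [← neg_mul_neg]; exact Γ.mul_mem ha hb
  inv_mem' := by
    intro a ha
    have e : h * a⁻¹ * h⁻¹ = (h * a * h⁻¹)⁻¹ := by group
    simp only [Set.mem_setOf_eq] at *
    rw [e]
    rcases ha with ha | ha
    · exact Or.inl (Γ.inv_mem ha)
    · right
      have : -(h * a * h⁻¹)⁻¹ = (-(h * a * h⁻¹))⁻¹ := by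
        apply ext_coord <;> simp [al_inv, be_inv, pp_inv, rr_inv, al_neg, be_neg, pp_neg, rr_neg]
      rw [this]; exact Γ.inv_mem ha

lemma GG_fin {Γ : Subgroup SL2R} (hd : IsDiscreteSubgroupR Γ) (h : SL2R) : Fin' (GG Γ h) := by
  intro R
  haveI htg : IsTopologicalGroup SL2R := Matrix.SpecialLinearGroup.topologicalGroup
  have c1 : Continuous fun g : SL2R => h * g * h⁻¹ := by fun_prop
  have c2 : Continuous fun g : SL2R => (-1) * (h * g * h⁻¹) := by fun_prop
  have i1 : Function.Injective fun g : SL2R => h * g * h⁻¹ := by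
    intro a b hab
    simpa using hab
  have i2 : Function.Injective fun g : SL2R => (-1) * (h * g * h⁻¹) := by
    intro a b hab
    exact i1 (mul_left_cancel hab)
  refine ((disc_fin hd _ c1 i1 R).union (disc_fin hd _ c2 i2 R)).subset ?_
  rintro g ⟨hg, hb⟩
  rcases hg with hg | hg
  · exact Or.inl ⟨hg, hb⟩
  · exact Or.inr ⟨by rw [neg_one_mul]; exact hg, hb⟩

lemma main_aux (A B : SL2R)
    (hd : IsDiscreteSubgroupR (Subgroup.closure {A, B}))
    (hne : IsNonelementaryR (Subgroup.closure {A, B})) (z : UpperHalfPlane)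
    (h1 : dist (A • z) z < 2 * arsinh (√de)) (h2 : dist (B • z) z < 2 * arsinh (√de)) : False := by
  obtain ⟨h, rfl⟩ : ∃ h : SL2R, h • UpperHalfPlane.I = z := ⟨_, UpperHalfPlane.toSL2R_smul_I z⟩
  have key : ∀ T : SL2R, dist (T • h • UpperHalfPlane.I) (h • UpperHalfPlane.I) =
      dist ((h⁻¹ * T * h) • UpperHalfPlane.I) UpperHalfPlane.I := by
    intro T
    rw [← dist_smul h ((h⁻¹ * T * h) • UpperHalfPlane.I), ← mul_smul, ← mul_smul]
    congr 2; group
  rw [key] at h1 h2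
  have eT : ∀ T : SL2R, h * (h⁻¹ * T * h) * h⁻¹ = T := by intro T; group
  have hmem : ∀ T ∈ Subgroup.closure {A, B}, h⁻¹ * T * h ∈ GG (Subgroup.closure {A, B}) h := by
    intro T hT
    left
    rw [eT]; exact hT
  have hPar : ∀ T g : SL2R, Par (h⁻¹ * T * h) g → Par T (h * g * h⁻¹) := by
    rintro T g ⟨la, hla⟩
    refine ⟨la, ?_⟩
    have := Sc_conj h hla
    have e : h * (h⁻¹ * T * h * g * (h⁻¹ * T * h)⁻¹) * h⁻¹ = T * (h * g * h⁻¹) * T⁻¹ := by group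
    rwa [e] at this
  refine core (G := GG (Subgroup.closure {A, B}) h) ?_ (GG_fin hd h)
    (hmem A (Subgroup.subset_closure (by simp))) (hmem B (Subgroup.subset_closure (by simp)))
    ?_ (dd_lt_of_dist h1) (dd_lt_of_dist h2)
  · right
    have : -(h * -1 * h⁻¹) = 1 := by simp
    rw [this]; exact Subgroup.one_mem _
  · intro g hg hgA hgB
    refine no_common_s3 hne (h * g * h⁻¹) ?_ (hPar A g hgA) (hPar B g hgB)
    intro h0
    apply hg
    have hc := central_comm h0 h
    have e : g = h * g * h⁻¹ := by
      have := congrArg (fun x => h⁻¹ * x) hc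
      have e1 : h⁻¹ * (h * g * h⁻¹ * h) = g := by group
      have e2 : h⁻¹ * (h * (h * g * h⁻¹)) = h * g * h⁻¹ := by group
      rwa [e1, e2] at this
    rw [e]; exact h0

/-- Yamada's theorem: the Margulis constant for Fuchsian groups. -/
theorem margulis_fuchsian (A B : SL2R)
    (hd : IsDiscreteSubgroupR (Subgroup.closure {A, B}))
    (hne : IsNonelementaryR (Subgroup.closure {A, B})) :
    ∀ z : UpperHalfPlane,
      max (dist (A • z) z) (dist (B • z) z) ≥
        2 * Real.arsinh (Real.sqrt
          ((2 * Real.cos (2 * π / 7) - 1) / (8 * Real.cos (π / 7) + 7))) := by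
  intro z
  rw [de_eq]
  by_contra hcon
  rw [ge_iff_le, not_le, max_lt_iff] at hcon
  exact main_aux A B hd hne z hcon.1 hcon.2

end
end
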